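/- arXiv:1408.5391 — 2 statements merged into one kernel-verified Lean document; each statement's English description precedes it below -/
import Mathlib

section
/- For every integer n ≥ 1, the rank generating function of the order ideals of the three-color tetrahedral poset T_n({g,y,o}) satisfies F(J(T_n({g,y,o})),q) = ∏_{j=1}^{n−1} (1+q^j)^{n−j}, as polynomials in ℤ[q]; in particular the number of order ideals is 2^{binomial(n,2)}. -/
open scoped Classical

noncomputable section

/-- `V3 n` is the set `{(a,b,c) ∈ ℤ≥0³ : a + b + c ≤ n - 2}`. -/
def V3 (n : ℕ) : Finset (ℤ × ℤ × ℤ) :=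
  ((Finset.Icc (0:ℤ) (n:ℤ) ×ˢ Finset.Icc (0:ℤ) (n:ℤ) ×ˢ Finset.Icc (0:ℤ) (n:ℤ)).filter
    (fun p => p.1 + p.2.1 + p.2.2 ≤ (n:ℤ) - 2))

/-- The six edge vectors. -/
def vr : ℤ × ℤ × ℤ := (1,0,0)
def vg : ℤ × ℤ × ℤ := (0,1,0)
def vy : ℤ × ℤ × ℤ := (0,0,1)
def vb : ℤ × ℤ × ℤ := (-1,1,0)
def vo : ℤ × ℤ × ℤ := (-1,0,1)
def vs : ℤ × ℤ × ℤ := (0,1,-1)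

/-- One step: add a vector of `S`, staying inside `W`. -/
def step3 (S : Set (ℤ × ℤ × ℤ)) (W : Finset (ℤ × ℤ × ℤ)) (u v : ℤ × ℤ × ℤ) : Prop :=
  u ∈ W ∧ v ∈ W ∧ ∃ e ∈ S, v = u + e

/-- The order relation of `T_n(S)`: reflexive-transitive closure of `step3`,
restricted to `W`. -/
def le3 (S : Set (ℤ × ℤ × ℤ)) (W : Finset (ℤ × ℤ × ℤ)) (u v : ℤ × ℤ × ℤ) : Prop :=
  u ∈ W ∧ v ∈ W ∧ Relation.ReflTransGen (step3 S W) u v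

/-- An order ideal: a downward closed subset of `W`. -/
def IsIdeal3 (S : Set (ℤ × ℤ × ℤ)) (W : Finset (ℤ × ℤ × ℤ))
    (I : Finset (ℤ × ℤ × ℤ)) : Prop :=
  I ⊆ W ∧ ∀ u v : ℤ × ℤ × ℤ, le3 S W u v → v ∈ I → u ∈ I

/-- The set of all order ideals of `T_n(S)`. -/
def ideals3 (S : Set (ℤ × ℤ × ℤ)) (W : Finset (ℤ × ℤ × ℤ)) :
    Finset (Finset (ℤ × ℤ × ℤ)) :=
  W.powerset.filter (fun I => IsIdeal3 S W I)

/-- The rank generating function `F(J(T_n(S)),q) = Σ_{I} q^{|I|}`. -/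
def genF3 (S : Set (ℤ × ℤ × ℤ)) (W : Finset (ℤ × ℤ × ℤ)) : Polynomial ℤ :=
  ∑ I ∈ ideals3 S W, Polynomial.X ^ I.card

end

/-!
Slice the tetrahedron by `s = a + b`. An order ideal is determined by the heights `h(s, i)` of its
columns `a = i`, `b = s - i`, and closure under `g` and `o` says that the numbers
`T(s, i) = h(s, i) + i` interlace: `T(s + 1, i) ≤ T(s, i) ≤ T(s + 1, i + 1)`. So order ideals are
Gelfand–Tsetlin patterns whose top row is the staircase `0, 1, 2, …`, and `q ^ |I|` is, up to a
constant power of `q`, the weight of the pattern in the principal specialization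
`s_λ(1, q, q ^ 2, …)` of a Schur polynomial. Summing over one interlacing row at a time is
multilinearity of the determinant plus geometric series, and evaluates the sum over all patterns as
the bialternant `det (q ^ (k (ν_i + i)))` divided by a product of factors `q ^ (k + 1) - 1`. For the
staircase this determinant is a Vandermonde determinant in `q ^ (2 i)`, and the factors
`q ^ (2 s) - q ^ (2 i) = (q ^ s - q ^ i) (q ^ s + q ^ i)` leave the product of the `1 + q ^ j`.
-/

section Preliminaries

open Finset

theorem prod_Icc_pow_eq_prod_range {M : Type*} [CommMonoid M] (f : ℕ → M) (N : ℕ) :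
    ∏ j ∈ Icc 1 N, f j ^ (N + 1 - j) = ∏ s ∈ range N, ∏ k ∈ range (s + 1), f (k + 1) := by
  have hswap : ∏ s ∈ range N, ∏ k ∈ range (s + 1), f (k + 1) =
      ∏ k ∈ range N, ∏ _s ∈ Ico k N, f (k + 1) :=
    prod_comm' (by simp only [mem_range, mem_Ico]; omega)
  have hcol (k : ℕ) : ∏ _s ∈ Ico k N, f (k + 1) = f (k + 1) ^ (N + 1 - (k + 1)) := by
    rw [prod_const, Nat.card_Ico, Nat.add_sub_add_right]
  rw [hswap, prod_congr rfl fun k _ => hcol k, range_eq_Ico,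
    prod_Ico_add' (fun j => f j ^ (N + 1 - j)) 0 N 1, zero_add, Ico_add_one_right_eq_Icc]

variable {R : Type*} [CommRing R]

theorem det_vandermonde_eq_det_sub {n : ℕ} (v : Fin (n + 1) → R) :
    (Matrix.vandermonde v).det =
      (Matrix.of fun i k : Fin n =>
        v i.succ ^ ((k : ℕ) + 1) - v i.castSucc ^ ((k : ℕ) + 1)).det := by
  have hsub := Matrix.det_eq_of_forall_row_eq_smul_add_pred (A := Matrix.vandermonde v)
    (B := Matrix.of (Fin.cons (fun k : Fin (n + 1) => v 0 ^ (k : ℕ)) fun i k =>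
      v i.succ ^ (k : ℕ) - v i.castSucc ^ (k : ℕ))) (fun _ => 1)
    (fun k => by simp) (fun i k => by simp)
  rw [hsub, Matrix.det_succ_column_zero, Fin.sum_univ_succ]
  simp [Matrix.submatrix]

theorem det_vandermonde_eq_prod_range (v : ℕ → R) (n : ℕ) :
    (Matrix.vandermonde fun i : Fin (n + 1) => v i).det =
      ∏ s ∈ range n, ∏ i ∈ range (s + 1), (v (s + 1) - v i) := by
  have hswap : (Matrix.vandermonde fun i : Fin (n + 1) => v i).det =
      ∏ j : Fin (n + 1), ∏ i ∈ Iio j, (v j - v i) := by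
    rw [Matrix.det_vandermonde]
    exact prod_comm' (by simp)
  have hIio (j : Fin (n + 1)) : ∏ i ∈ Iio j, (v j - v i) = ∏ i ∈ range j, (v j - v i) := by
    rw [← Nat.Iio_eq_range, ← Fin.map_valEmbedding_Iio, prod_map]
    rfl
  simp_rw [hswap, hIio, Fin.prod_univ_eq_prod_range (fun j => ∏ i ∈ range j, (v j - v i)),
    prod_range_succ' _ n, range_zero, prod_empty, mul_one]

theorem sum_piFinset_det {m : Type*} [Fintype m] [DecidableEq m] {ι : Type*} (S : m → Finset ι)
    (A : m → ι → m → R) :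
    ∑ μ ∈ Fintype.piFinset S, (Matrix.of fun i => A i (μ i)).det =
      (Matrix.of fun i => ∑ x ∈ S i, A i x).det :=
  (Matrix.detRowAlternating.map_sum_finset A S).symm

theorem sub_one_mul_sum_Icc_pow (x : R) {lo hi : ℕ} (h : lo ≤ hi + 1) (e : ℕ) :
    (x - 1) * ∑ m ∈ Icc lo hi, x ^ (m + e) = x ^ (hi + 1 + e) - x ^ (lo + e) := by
  simp_rw [pow_add x _ e, ← sum_mul, ← sub_mul]
  rw [← mul_assoc, mul_comm (x - 1), ← Ico_add_one_right_eq_Icc, geom_sum_Ico_mul x h]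

end Preliminaries

section Alternant

open Finset

variable {R : Type*} [CommRing R]

/-- The bialternant `det (x_k ^ (μ_i + i))` at `x = (1, q, q ^ 2, …)`, the numerator of the
principal specialization of a Schur polynomial. The parts `μ_i` are listed in increasing order. -/
def alternant (q : R) {n : ℕ} (μ : Fin n → ℕ) : R :=
  (Matrix.vandermonde fun i => q ^ (μ i + i)).det

/-- The sequences `μ` interlacing with `ν`, that is `ν_0 ≤ μ_0 ≤ ν_1 ≤ μ_1 ≤ …`: the possible
rows below the row `ν` of a Gelfand–Tsetlin pattern. -/
def interlacing {n : ℕ} (ν : Fin (n + 1) → ℕ) : Finset (Fin n → ℕ) :=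
  Fintype.piFinset fun i => Icc (ν i.castSucc) (ν i.succ)

theorem mem_interlacing {n : ℕ} {ν : Fin (n + 1) → ℕ} {μ : Fin n → ℕ} :
    μ ∈ interlacing ν ↔ ∀ i, ν i.castSucc ≤ μ i ∧ μ i ≤ ν i.succ := by
  simp [interlacing]

theorem monotone_of_mem_interlacing {n : ℕ} {ν : Fin (n + 1) → ℕ} {μ : Fin n → ℕ}
    (hμ : μ ∈ interlacing ν) : Monotone μ := by
  cases n with
  | zero => exact fun i => i.elim0
  | succ n =>
    rw [mem_interlacing] at hμ
    exact Fin.monotone_iff_le_succ.2 fun i => (hμ i.castSucc).2.trans (hμ i.succ).1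

theorem pow_sum_mul_alternant (q : R) {n : ℕ} (μ : Fin n → ℕ) :
    q ^ (∑ i, (μ i + i)) * alternant q μ =
      (Matrix.of fun i k : Fin n => (q ^ ((k : ℕ) + 1)) ^ (μ i + i)).det := by
  rw [← prod_pow_eq_pow_sum, alternant, ← Matrix.det_mul_column]
  simp only [Matrix.vandermonde_apply, ← pow_succ', pow_right_comm q _ (_ + 1)]

theorem prod_sub_one_mul_sum_interlacing (q : R) {n : ℕ} {ν : Fin (n + 1) → ℕ}
    (hν : Monotone ν) :
    (∏ k : Fin n, (q ^ ((k : ℕ) + 1) - 1)) *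
        ∑ μ ∈ interlacing ν, q ^ (∑ i, (μ i + i)) * alternant q μ =
      alternant q ν := by
  simp_rw [pow_sum_mul_alternant]
  rw [interlacing,
    sum_piFinset_det _ fun (i : Fin n) m (k : Fin n) => (q ^ ((k : ℕ) + 1)) ^ (m + (i : ℕ)),
    ← Matrix.det_mul_row, alternant, det_vandermonde_eq_det_sub]
  congr 2 with i k
  have hle : ν i.castSucc ≤ ν i.succ + 1 := (hν i.castSucc_le_succ).trans (Nat.le_succ _)
  rw [Matrix.of_apply, Finset.sum_apply, sub_one_mul_sum_Icc_pow _ hle,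
    pow_right_comm q _ (k + 1 : ℕ), pow_right_comm q _ (k + 1 : ℕ), Fin.val_succ,
    Fin.val_castSucc, add_right_comm, add_assoc]

theorem alternant_val (q : R) (n : ℕ) :
    alternant q (fun i : Fin (n + 1) => (i : ℕ)) =
      (∏ s ∈ range n, ∏ k ∈ range (s + 1), (q ^ (k + 1) - 1)) *
        ((∏ s ∈ range n, ∏ i ∈ range (s + 1), q ^ (2 * i)) *
          ∏ s ∈ range n, ∏ k ∈ range (s + 1), (1 + q ^ (k + 1))) := by
  have hfactor (s : ℕ) : ∏ i ∈ range (s + 1), (q ^ (s + 1 + (s + 1)) - q ^ (i + i)) =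
      (∏ k ∈ range (s + 1), (q ^ (k + 1) - 1)) *
        ((∏ i ∈ range (s + 1), q ^ (2 * i)) * ∏ k ∈ range (s + 1), (1 + q ^ (k + 1))) := by
    rw [← prod_range_reflect (fun k => q ^ (k + 1) - 1),
      ← prod_range_reflect (fun k => 1 + q ^ (k + 1)), ← prod_mul_distrib, ← prod_mul_distrib]
    refine prod_congr rfl fun i hi => ?_
    obtain ⟨d, rfl⟩ := Nat.exists_eq_add_of_le (Nat.lt_succ_iff.1 (mem_range.1 hi))
    have hd : i + d + 1 - 1 - i = d := by omega
    rw [hd]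
    ring
  rw [alternant, det_vandermonde_eq_prod_range (fun i => q ^ (i + i)),
    prod_congr rfl fun s _ => hfactor s]
  simp_rw [prod_mul_distrib]

end Alternant

section GelfandTsetlin

open Finset

/-- Triangular arrays of natural numbers with rows `0, …, n`, the row `s` having `s + 1` entries;
the carrier of the Gelfand–Tsetlin patterns. -/
abbrev TriangularArray (n : ℕ) : Type := ∀ s : Fin (n + 1), Fin (s + 1) → ℕ

/-- The Gelfand–Tsetlin patterns with top row `ν`, built by adding the top row last. Row `n` is the
top row, and rows are listed in increasing order. -/
def gtPatterns : (n : ℕ) → (Fin (n + 1) → ℕ) → Finset (TriangularArray n)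
  | 0, ν => {Fin.snoc (fun s => s.elim0) ν}
  | n + 1, ν => (interlacing ν).biUnion fun μ =>
      (gtPatterns n μ).image fun T : TriangularArray n => Fin.snoc T ν

theorem mem_gtPatterns {n : ℕ} {ν : Fin (n + 1) → ℕ} {T : TriangularArray n} :
    T ∈ gtPatterns n ν ↔
      T (Fin.last n) = ν ∧ ∀ s : Fin n, T s.castSucc ∈ interlacing (T s.succ) := by
  induction n with
  | zero =>
    simp only [gtPatterns, mem_singleton, IsEmpty.forall_iff, and_true]
    constructor
    · rintro rfl
      rfl
    · rintro rfl
      funext s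
      obtain rfl : s = Fin.last 0 := Fin.fin_one_eq_zero s
      rfl
  | succ n ih =>
    simp only [gtPatterns, mem_biUnion, mem_image, ih]
    constructor
    · rintro ⟨μ, hμ, T, ⟨rfl, hT⟩, rfl⟩
      refine ⟨Fin.snoc_last .., Fin.lastCases ?_ fun s => ?_⟩
      · simpa [Fin.succ_last] using hμ
      · simpa only [Fin.succ_castSucc, Fin.snoc_castSucc] using hT s
    · rintro ⟨rfl, hT⟩
      exact ⟨_, hT (Fin.last n), Fin.init T, ⟨rfl, fun s => hT s.castSucc⟩, Fin.snoc_init_self T⟩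

/-- The weight of a pattern under the principal specialization: the sum of `T s i + i` over the
rows `s < n`, that is, over all rows but the top one. -/
def TriangularArray.lowerWeight {n : ℕ} (T : TriangularArray n) : ℕ :=
  ∑ s : Fin n, ∑ i : Fin (s + 1), (T s.castSucc i + i)

theorem TriangularArray.lowerWeight_snoc {n : ℕ} (T : TriangularArray n) (ν : Fin (n + 2) → ℕ) :
    lowerWeight (n := n + 1) (Fin.snoc T ν) =
      ∑ i : Fin (n + 1), (T (Fin.last n) i + i) + T.lowerWeight := by
  rw [lowerWeight, Fin.sum_univ_castSucc, add_comm]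
  simp [lowerWeight]

theorem sum_gtPatterns_succ {R : Type*} [CommSemiring R] (q : R) {n : ℕ} (ν : Fin (n + 2) → ℕ) :
    ∑ T ∈ gtPatterns (n + 1) ν, q ^ T.lowerWeight =
      ∑ μ ∈ interlacing ν, q ^ (∑ i, (μ i + i)) * ∑ T ∈ gtPatterns n μ, q ^ T.lowerWeight := by
  have hdisj : (interlacing ν : Set (Fin (n + 1) → ℕ)).PairwiseDisjoint fun μ =>
      (gtPatterns n μ).image fun T : TriangularArray n =>
        (Fin.snoc T ν : TriangularArray (n + 1)) := by
    refine fun μ _ μ' _ hne => disjoint_left.2 fun U hU hU' => hne ?_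
    obtain ⟨T, hT, rfl⟩ := mem_image.1 hU
    obtain ⟨T', hT', hTT'⟩ := mem_image.1 hU'
    rw [← (mem_gtPatterns.1 hT).1, ← (mem_gtPatterns.1 hT').1, (Fin.snoc_inj.1 hTT').1]
  have hinj : Function.Injective fun T : TriangularArray n =>
      (Fin.snoc T ν : TriangularArray (n + 1)) := fun T T' h => (Fin.snoc_inj.1 h).1
  rw [gtPatterns, sum_biUnion hdisj]
  refine sum_congr rfl fun μ _ => ?_
  rw [sum_image hinj.injOn, mul_sum]
  refine sum_congr rfl fun T hT => ?_
  rw [TriangularArray.lowerWeight_snoc, (mem_gtPatterns.1 hT).1, pow_add]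

theorem prod_sub_one_mul_sum_gtPatterns {R : Type*} [CommRing R] (q : R) {n : ℕ}
    {ν : Fin (n + 1) → ℕ} (hν : Monotone ν) :
    (∏ s ∈ range n, ∏ k ∈ range (s + 1), (q ^ (k + 1) - 1)) *
        ∑ T ∈ gtPatterns n ν, q ^ T.lowerWeight =
      alternant q ν := by
  induction n with
  | zero => simp [gtPatterns, TriangularArray.lowerWeight, alternant]
  | succ n ih =>
    rw [sum_gtPatterns_succ, ← prod_sub_one_mul_sum_interlacing q hν, prod_range_succ,
      ← Fin.prod_univ_eq_prod_range (fun k => q ^ (k + 1) - 1) (n + 1), mul_right_comm, mul_comm,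
      mul_sum]
    congr 1
    refine sum_congr rfl fun μ hμ => ?_
    rw [mul_left_comm, ih (monotone_of_mem_interlacing hμ)]

theorem mem_Icc_of_mem_gtPatterns_val {n : ℕ} {T : TriangularArray n}
    (hT : T ∈ gtPatterns n fun i => i) (s : Fin (n + 1)) (i : Fin (s + 1)) :
    T s i ∈ Icc (i : ℕ) (i + (n - s)) := by
  obtain ⟨htop, hrows⟩ := mem_gtPatterns.1 hT
  rw [mem_Icc]
  induction s using Fin.reverseInduction with
  | last => simp [congrFun htop i]
  | cast s ih =>
    have hi := mem_interlacing.1 (hrows s) i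
    have hlo := ih i.castSucc
    have hhi := ih i.succ
    simp only [Fin.val_succ, Fin.val_castSucc] at *
    omega

end GelfandTsetlin

section Ideals

open Finset

theorem isIdeal3_iff_step3 {S : Set (ℤ × ℤ × ℤ)} {W I : Finset (ℤ × ℤ × ℤ)} :
    IsIdeal3 S W I ↔ I ⊆ W ∧ ∀ u v, step3 S W u v → v ∈ I → u ∈ I := by
  refine and_congr_right fun _ => ⟨fun h u v huv => h u v ⟨huv.1, huv.2.1, .single huv⟩, ?_⟩
  rintro h u v ⟨-, -, huv⟩ hv
  induction huv using Relation.ReflTransGen.head_induction_on with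
  | refl => exact hv
  | head hstep _ ih => exact h _ _ hstep ih

/-- The point `(a, b, c)` of the tetrahedron with `a = i` and `a + b = s`. In the
coordinates `(s, i, c)` the steps `vg`, `vy`, `vo` are `(1, 0, 0)`, `(0, 0, 1)`, `(-1, -1, 1)`. -/
def cell (s i c : ℕ) : ℤ × ℤ × ℤ := (i, s - i, c)

theorem cell_inj {s i c s' i' c' : ℕ} :
    cell s i c = cell s' i' c' ↔ s = s' ∧ i = i' ∧ c = c' := by
  simp only [cell, Prod.mk.injEq]
  omega

theorem mem_V3_succ_iff_exists_cell {N : ℕ} {p : ℤ × ℤ × ℤ} :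
    p ∈ V3 (N + 1) ↔ ∃ s i c : ℕ, i ≤ s ∧ s + c < N ∧ cell s i c = p := by
  obtain ⟨x, y, z⟩ := p
  simp only [V3, cell, mem_filter, mem_product, mem_Icc, Prod.mk.injEq]
  constructor
  · intro h
    exact ⟨(x + y).toNat, x.toNat, z.toNat, by omega⟩
  · rintro ⟨s, i, c, h⟩
    omega

theorem cell_mem_V3_succ {N s i c : ℕ} : cell s i c ∈ V3 (N + 1) ↔ i ≤ s ∧ s + c < N := by
  simp only [mem_V3_succ_iff_exists_cell, cell_inj]
  constructor
  · rintro ⟨_, _, _, hi, hc, rfl, rfl, rfl⟩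
    exact ⟨hi, hc⟩
  · rintro ⟨hi, hc⟩
    exact ⟨s, i, c, hi, hc, rfl, rfl, rfl⟩

theorem mem_ideals3_gyo {N : ℕ} {I : Finset (ℤ × ℤ × ℤ)} :
    I ∈ ideals3 {vg, vy, vo} (V3 (N + 1)) ↔
      I ⊆ V3 (N + 1) ∧ ∀ s i c, i ≤ s →
        (cell (s + 1) i c ∈ I → cell s i c ∈ I) ∧
        (cell s i (c + 1) ∈ I → cell s i c ∈ I) ∧
        (cell s i (c + 1) ∈ I → cell (s + 1) (i + 1) c ∈ I) := by
  have hg (s i c : ℕ) : cell (s + 1) i c = cell s i c + vg := by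
    simp [cell, vg, add_sub_right_comm]
  have hy (s i c : ℕ) : cell s i (c + 1) = cell s i c + vy := by simp [cell, vy]
  have ho (s i c : ℕ) : cell s i (c + 1) = cell (s + 1) (i + 1) c + vo := by simp [cell, vo]
  rw [ideals3, mem_filter, mem_powerset, isIdeal3_iff_step3, and_self_left]
  refine and_congr_right fun hI => ⟨fun h s i c hi => ?_, fun h u v ⟨hu, hv, e, he, hue⟩ hvI => ?_⟩
  · have down {u v e} (he : e ∈ ({vg, vy, vo} : Set (ℤ × ℤ × ℤ))) (hue : v = u + e)
        (hu : v ∈ V3 (N + 1) → u ∈ V3 (N + 1)) (hv : v ∈ I) : u ∈ I :=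
      h u v ⟨hu (hI hv), hI hv, e, he, hue⟩ hv
    refine ⟨down (by simp) (hg s i c) ?_, down (by simp) (hy s i c) ?_,
      down (by simp) (ho s i c) ?_⟩ <;>
    · simp only [cell_mem_V3_succ]
      omega
  · obtain ⟨s, i, c, hi, -, rfl⟩ := mem_V3_succ_iff_exists_cell.1 hu
    obtain rfl | rfl | rfl := he
    · exact (h s i c hi).1 (by rwa [hg, ← hue])
    · exact (h s i c hi).2.1 (by rwa [hy, ← hue])
    · obtain ⟨s', i', c', hi', -, hv'⟩ := mem_V3_succ_iff_exists_cell.1 hv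
      obtain ⟨rfl, rfl, rfl⟩ : s = s' + 1 ∧ i = i' + 1 ∧ c' = c + 1 := by
        simp only [hue, cell, vo, Prod.mk_add_mk, Prod.mk.injEq] at hv'
        omega
      exact (h s' i' c hi').2.2 (by rwa [hv'])

/-- The height of `I` over the column `a = i`, `a + b = s`: the least `c` whose cell is missing
from `I`. It counts the cells of the column in `I` as soon as `I` is closed under `-vy`. -/
noncomputable def columnHeight (I : Finset (ℤ × ℤ × ℤ)) (s i : ℕ) : ℕ :=
  sInf {c | cell s i c ∉ I}

theorem cell_mem_iff_lt_columnHeight {I : Finset (ℤ × ℤ × ℤ)} {s i : ℕ}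
    (hI : ∀ c, cell s i (c + 1) ∈ I → cell s i c ∈ I) (c : ℕ) :
    cell s i c ∈ I ↔ c < columnHeight I s i := by
  refine ⟨fun hc => ?_, fun hc => by simpa using Nat.notMem_of_lt_sInf hc⟩
  have hinj : Function.Injective (cell s i) := fun c c' h => (cell_inj.1 h).2.2
  obtain ⟨d, hd⟩ : ∃ d, cell s i d ∉ I := by
    by_contra! hall
    exact Set.infinite_of_injective_forall_mem hinj hall I.finite_toSet
  have hanti : Antitone fun c => cell s i c ∈ I := antitone_nat_of_succ_le hI
  by_contra! hle
  exact Nat.sInf_mem (s := {c | cell s i c ∉ I}) ⟨d, hd⟩ (hanti hle hc)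

namespace TriangularArray

/-- The array of column heights of an order ideal. The shift by `i` turns closure under `vg` and
`vo` into the two interlacing inequalities, and the empty top row into the staircase. -/
noncomputable def ofIdeal (N : ℕ) (I : Finset (ℤ × ℤ × ℤ)) : TriangularArray N :=
  fun s i => columnHeight I s i + i

/-- The cells lying below the columns of height `T s i - i`; the inverse of
`TriangularArray.ofIdeal` on the patterns whose top row is the staircase. -/
def toIdeal {N : ℕ} (T : TriangularArray N) : Finset (ℤ × ℤ × ℤ) :=
  (univ.sigma fun s => univ.sigma fun i => range (T s i - i)).image fun x => cell x.1 x.2.1 x.2.2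

theorem mem_toIdeal {N : ℕ} {T : TriangularArray N} {p : ℤ × ℤ × ℤ} :
    p ∈ T.toIdeal ↔ ∃ (s : Fin (N + 1)) (i : Fin (s + 1)) (c : ℕ),
      c + i < T s i ∧ cell s i c = p := by
  simp only [toIdeal, mem_image, mem_sigma, mem_univ, true_and, mem_range,
    Sigma.exists, Nat.lt_sub_iff_add_lt]

theorem cell_mem_toIdeal {N : ℕ} {T : TriangularArray N} (s : Fin (N + 1)) (i : Fin (s + 1))
    {c : ℕ} : cell s i c ∈ T.toIdeal ↔ c + i < T s i := by
  rw [mem_toIdeal]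
  refine ⟨?_, fun h => ⟨s, i, c, h, rfl⟩⟩
  rintro ⟨s', i', c', h, heq⟩
  obtain ⟨hs, hi, rfl⟩ := cell_inj.1 heq
  obtain rfl := Fin.ext hs
  obtain rfl := Fin.ext hi
  exact h

theorem card_toIdeal {N : ℕ} (T : TriangularArray N) :
    T.toIdeal.card = ∑ s, ∑ i, (T s i - i) := by
  rw [toIdeal, card_image_of_injective, card_sigma]
  · simp
  · rintro ⟨s, i, c⟩ ⟨s', i', c'⟩ h
    obtain ⟨hs, hi, rfl⟩ := cell_inj.1 h
    obtain rfl := Fin.ext hs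
    obtain rfl := Fin.ext hi
    rfl

theorem ofIdeal_mem_gtPatterns {N : ℕ} {I : Finset (ℤ × ℤ × ℤ)}
    (hI : I ∈ ideals3 {vg, vy, vo} (V3 (N + 1))) :
    ofIdeal N I ∈ gtPatterns N fun i => i := by
  obtain ⟨hV, hdown⟩ := mem_ideals3_gyo.1 hI
  have hmem {s i : ℕ} (hi : i ≤ s) := cell_mem_iff_lt_columnHeight fun c => (hdown s i c hi).2.1
  refine mem_gtPatterns.2 ⟨funext fun i => ?_, fun s => mem_interlacing.2 fun i => ?_⟩
  · have hi : (i : ℕ) ≤ N := Nat.lt_succ_iff.1 i.2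
    have htop : columnHeight I N i = 0 := by
      by_contra! hpos
      have := cell_mem_V3_succ.1 (hV ((hmem hi 0).2 (Nat.pos_of_ne_zero hpos)))
      omega
    simp [ofIdeal, htop]
  · have hi : (i : ℕ) ≤ s := Nat.lt_succ_iff.1 i.2
    have hg : columnHeight I (s + 1) i ≤ columnHeight I s i := by
      by_contra! hlt
      exact lt_irrefl _ ((hmem hi _).1 ((hdown s i _ hi).1 ((hmem (by omega) _).2 hlt)))
    have ho : columnHeight I s i ≤ columnHeight I (s + 1) (i + 1) + 1 := by
      by_contra! hlt
      exact lt_irrefl _ ((hmem (by omega) _).1 ((hdown s i _ hi).2.2 ((hmem hi _).2 hlt)))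
    simp only [ofIdeal, Fin.val_castSucc, Fin.val_succ]
    omega

theorem toIdeal_mem_ideals3 {N : ℕ} {T : TriangularArray N} (hT : T ∈ gtPatterns N fun i => i) :
    T.toIdeal ∈ ideals3 {vg, vy, vo} (V3 (N + 1)) := by
  have hbound := mem_Icc_of_mem_gtPatterns_val hT
  have hrow {s i : ℕ} (hs : s < N) (hi : i ≤ s) :=
    mem_interlacing.1 ((mem_gtPatterns.1 hT).2 ⟨s, hs⟩) ⟨i, Nat.lt_succ_iff.2 hi⟩
  have hV : T.toIdeal ⊆ V3 (N + 1) := by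
    intro p hp
    obtain ⟨s, i, c, hc, rfl⟩ := mem_toIdeal.1 hp
    have := mem_Icc.1 (hbound s i)
    rw [cell_mem_V3_succ]
    omega
  have hmem {s i c : ℕ} (hs : s < N + 1) (hi : i < s + 1) :
      cell s i c ∈ T.toIdeal ↔ c + i < T ⟨s, hs⟩ ⟨i, hi⟩ := cell_mem_toIdeal ⟨s, hs⟩ ⟨i, hi⟩
  refine mem_ideals3_gyo.2 ⟨hV, fun s i c hi => ⟨fun hp => ?_, fun hp => ?_, fun hp => ?_⟩⟩ <;>
    have hc := (cell_mem_V3_succ.1 (hV hp)).2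
  · rw [hmem (by omega) (by omega)] at hp ⊢
    exact hp.trans_le (hrow (by omega) hi).1
  · rw [hmem (by omega) (by omega)] at hp ⊢
    omega
  · rw [hmem (by omega) (by omega)] at hp ⊢
    rw [← add_assoc, add_right_comm]
    exact hp.trans_le (hrow (by omega) hi).2

theorem toIdeal_ofIdeal {N : ℕ} {I : Finset (ℤ × ℤ × ℤ)}
    (hI : I ∈ ideals3 {vg, vy, vo} (V3 (N + 1))) : (ofIdeal N I).toIdeal = I := by
  obtain ⟨hV, hdown⟩ := mem_ideals3_gyo.1 hI
  have hmem {s i : ℕ} (hi : i ≤ s) := cell_mem_iff_lt_columnHeight fun c => (hdown s i c hi).2.1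
  ext p
  rw [mem_toIdeal]
  constructor
  · rintro ⟨s, i, c, hc, rfl⟩
    exact (hmem (Nat.lt_succ_iff.1 i.2) c).2 (Nat.add_lt_add_iff_right.1 hc)
  · intro hp
    obtain ⟨s, i, c, hi, hc, rfl⟩ := mem_V3_succ_iff_exists_cell.1 (hV hp)
    exact ⟨⟨s, by omega⟩, ⟨i, Nat.lt_succ_iff.2 hi⟩, c,
      Nat.add_lt_add_right ((hmem hi c).1 hp) i, rfl⟩

theorem ofIdeal_toIdeal {N : ℕ} {T : TriangularArray N} (hT : T ∈ gtPatterns N fun i => i) :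
    ofIdeal N T.toIdeal = T := by
  obtain ⟨-, hdown⟩ := mem_ideals3_gyo.1 (toIdeal_mem_ideals3 hT)
  funext s i
  have hlo := (mem_Icc.1 (mem_Icc_of_mem_gtPatterns_val hT s i)).1
  have hheight : columnHeight T.toIdeal s i = T s i - i := by
    refine eq_of_forall_lt_iff fun c => ?_
    rw [← cell_mem_iff_lt_columnHeight fun c => (hdown s i c (Nat.lt_succ_iff.1 i.2)).2.1,
      cell_mem_toIdeal, Nat.lt_sub_iff_add_lt]
  rw [ofIdeal, hheight, Nat.sub_add_cancel hlo]

theorem lowerWeight_eq_card_toIdeal_add {N : ℕ} {T : TriangularArray N}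
    (hT : T ∈ gtPatterns N fun i => i) :
    T.lowerWeight = T.toIdeal.card + ∑ s ∈ range N, ∑ i ∈ range (s + 1), 2 * i := by
  have hlo s i := (mem_Icc.1 (mem_Icc_of_mem_gtPatterns_val hT s i)).1
  have htop : ∑ i, (T (Fin.last N) i - i) = 0 := by simp [(mem_gtPatterns.1 hT).1]
  rw [card_toIdeal, Fin.sum_univ_castSucc, htop, add_zero, ← Fin.sum_univ_eq_sum_range,
    ← sum_add_distrib, lowerWeight]
  refine sum_congr rfl fun s _ => ?_
  rw [← Fin.sum_univ_eq_sum_range (fun i => 2 * i)]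
  refine (sum_congr rfl fun i _ => ?_).trans sum_add_distrib
  have := hlo s.castSucc i
  omega

end TriangularArray

theorem sum_gtPatterns_val {R : Type*} [CommSemiring R] (q : R) (N : ℕ) :
    ∑ T ∈ gtPatterns N (fun i => i), q ^ T.lowerWeight =
      (∏ s ∈ range N, ∏ i ∈ range (s + 1), q ^ (2 * i)) *
        ∑ I ∈ ideals3 {vg, vy, vo} (V3 (N + 1)), q ^ I.card := by
  simp_rw [prod_pow_eq_pow_sum, mul_sum]
  refine sum_nbij' TriangularArray.toIdeal (TriangularArray.ofIdeal N)
    (fun T => TriangularArray.toIdeal_mem_ideals3)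
    (fun I => TriangularArray.ofIdeal_mem_gtPatterns) (fun T => TriangularArray.ofIdeal_toIdeal)
    (fun I => TriangularArray.toIdeal_ofIdeal) fun T hT => ?_
  rw [TriangularArray.lowerWeight_eq_card_toIdeal_add hT, pow_add, mul_comm]

theorem sum_ideals3_gyo {R : Type*} [CommRing R] [IsDomain R] {q : R} (hq0 : q ≠ 0)
    (hq1 : ∀ k : ℕ, q ^ (k + 1) ≠ 1) (N : ℕ) :
    ∑ I ∈ ideals3 {vg, vy, vo} (V3 (N + 1)), q ^ I.card =
      ∏ s ∈ range N, ∏ k ∈ range (s + 1), (1 + q ^ (k + 1)) := by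
  have h := prod_sub_one_mul_sum_gtPatterns q (Fin.val_strictMono (n := N + 1)).monotone
  rw [sum_gtPatterns_val, alternant_val] at h
  refine mul_left_cancel₀ ?_ (mul_left_cancel₀ ?_ h)
  · simp [prod_ne_zero_iff, hq0]
  · simp [prod_ne_zero_iff, sub_ne_zero, hq1]

theorem genF3_gyo (N : ℕ) :
    genF3 {vg, vy, vo} (V3 (N + 1)) =
      ∏ s ∈ range N, ∏ k ∈ range (s + 1), (1 + Polynomial.X ^ (k + 1)) := by
  refine sum_ideals3_gyo Polynomial.X_ne_zero (fun k hk => ?_) N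
  simpa using congrArg Polynomial.natDegree hk

theorem card_ideals3_gyo (N : ℕ) :
    (ideals3 {vg, vy, vo} (V3 (N + 1))).card = 2 ^ (N + 1).choose 2 := by
  have h := congrArg (Polynomial.eval 1) (genF3_gyo N)
  simp only [genF3, Polynomial.eval_finsetSum, Polynomial.eval_prod, Polynomial.eval_pow,
    Polynomial.eval_X, Polynomial.eval_add, Polynomial.eval_one, one_pow, sum_const, prod_const,
    card_range, nsmul_eq_mul, mul_one, prod_pow_eq_pow_sum, one_add_one_eq_two] at h
  have hexp : ∑ s ∈ range N, (s + 1) = (N + 1).choose 2 := by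
    rw [Nat.choose_two_right, ← sum_range_id, sum_range_succ', add_zero]
  rw [hexp] at h
  exact_mod_cast h

end Ideals

/-- The rank generating function of `J(T_n({g,y,o}))` is
`∏_{j=1}^{n-1} (1+q^j)^{n-j}`; in particular the number of order ideals is
`2^(binomial(n,2))`. -/
theorem stmt9 (n : ℕ) (hn : 1 ≤ n) :
    genF3 {vg, vy, vo} (V3 n) =
      (∏ j ∈ Finset.Icc 1 (n - 1), (1 + Polynomial.X ^ j) ^ (n - j)) ∧
    (ideals3 {vg, vy, vo} (V3 n)).card = 2 ^ (n.choose 2) := by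
  obtain ⟨N, rfl⟩ : ∃ N, n = N + 1 := Nat.exists_eq_add_of_le' hn
  refine ⟨?_, card_ideals3_gyo N⟩
  rw [genF3_gyo, Nat.add_sub_cancel,
    prod_Icc_pow_eq_prod_range fun j => (1 + Polynomial.X ^ j : Polynomial ℤ)]
end

section
/- For every integer n ≥ 1, the number of order ideals of the four-color tetrahedral poset T_n({r,g,o,y}) is given by the same product formula: |J(T_n({r,g,o,y}))| · ∏_{j=0}^{n−1} (n+j)! = ∏_{j=0}^{n−1} (3j+1)!. -/
open scoped Classical

/-!
An order ideal is encoded by the `n` strictly increasing exponents obtained from the row lengths of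
its layer `a = 0`. Passing from `V3 n` to `V3 (n + 1)` increases each exponent by `1` or `2`, with
collisions forbidden, and prepends the exponent `0`: in the exterior powers of `ℚ[X]` this is
multiplication by `p = X * (1 + X)` followed by `1 ∧ ·`. Hence the sum of `X ^ e₀ ∧ ⋯ ∧ X ^ eₙ₋₁`
over all ideals is `1 ∧ p ∧ ⋯ ∧ p ^ (n - 1)`, and the number of ideals is the sum of all `n × n`
minors of the coefficient matrix of `1, p, …, p ^ (n - 1)`.

Let `⟨X ^ s, X ^ t⟩` be `2`, `1` or `0` according as `s < t`, `s = t` or `s > t`. The sum of minors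
obeys an inhomogeneous Laplace expansion along an additional vector `q`: if `⟨p ^ i, q⟩ = 0` for all
`i < n`, then the sum of minors of `q, 1, p, …, p ^ (n - 1)` is `q(1)` times that of
`1, p, …, p ^ (n - 1)`. Choosing such a `q` of degree `n` in `p` gives the ratio of consecutive sums
of minors. The coefficients of `q` are hypergeometric, and its orthogonality is proved by creative
telescoping.
-/

/-- The sign of `b - a`, for elements of an arbitrary linear order. -/
def orderSign {ι : Type*} [LinearOrder ι] (a b : ι) : ℤ :=
  if a < b then 1 else if b < a then -1 else 0

section OrderSign

variable {ι : Type*} [LinearOrder ι] {a b : ι}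

lemma orderSign_of_lt (h : a < b) : orderSign a b = 1 :=
  if_pos h

lemma orderSign_of_gt (h : b < a) : orderSign a b = -1 := by
  simp [orderSign, h, h.not_gt]

lemma orderSign_self (a : ι) : orderSign a a = 0 := by
  simp [orderSign]

lemma orderSign_comm (a b : ι) : orderSign a b = -orderSign b a := by
  rcases lt_trichotomy a b with h | rfl | h
  · rw [orderSign_of_lt h, orderSign_of_gt h, neg_neg]
  · rw [orderSign_self, neg_zero]
  · rw [orderSign_of_lt h, orderSign_of_gt h]

lemma prod_Ioi_orderSign_of_strictMono {n : ℕ} {s : Fin n → ι} (hs : StrictMono s) :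
    ∏ i, ∏ j ∈ Finset.Ioi i, orderSign (s i) (s j) = 1 :=
  Finset.prod_eq_one fun _ _ => Finset.prod_eq_one fun _ hj =>
    orderSign_of_lt (hs (Finset.mem_Ioi.1 hj))

lemma sum_neg_one_pow_mul_one_add_orderSign {n : ℕ} {s : Fin n → ι} (hs : StrictMono s) (t : ι) :
    ∑ i : Fin n, (-1) ^ (i : ℕ) * (1 + orderSign (s i) t) = 1 - ∏ i, orderSign t (s i) := by
  induction n with
  | zero => simp
  | succ n ih =>
    have htail := ih (s := fun i => s i.succ) (hs.comp Fin.strictMono_succ)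
    have hle (h : t ≤ s 0) : ∏ i : Fin n, orderSign t (s i.succ) = 1 :=
      Finset.prod_eq_one fun i _ => orderSign_of_lt (h.trans_lt (hs i.succ_pos))
    simp only [Fin.sum_univ_succ, Fin.prod_univ_succ, Fin.val_zero, Fin.val_succ, pow_succ,
      mul_neg_one, neg_mul, Finset.sum_neg_distrib, htail, orderSign_comm (s 0) t]
    rcases lt_trichotomy t (s 0) with h | h | h
    · rw [hle h.le, orderSign_of_lt h]
      ring
    · rw [hle h.le, ← h, orderSign_self]
      ring
    · rw [orderSign_of_gt h]
      ring

end OrderSign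

section MinorSum

open Module

variable {ι R M N : Type*} [CommRing R] [AddCommGroup M] [Module R M] [AddCommGroup N] [Module R N]

/-- The linear form sending a vector to the sum of its coordinates in the basis `b`. -/
noncomputable def coordSum (b : Basis ι R M) : M →ₗ[R] R :=
  b.constr R 1

@[simp]
lemma coordSum_basis (b : Basis ι R M) (t : ι) : coordSum b (b t) = 1 :=
  b.constr_basis R _ t

variable [LinearOrder ι]

lemma alternatingMap_ext_of_strictMono {n : ℕ} (b : Basis ι R M) {f g : M [⋀^Fin n]→ₗ[R] N}
    (h : ∀ s : Fin n → ι, StrictMono s → f (b ∘ s) = g (b ∘ s)) : f = g := by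
  refine exteriorPower.alternatingMapLinearEquiv.injective ((b.exteriorPower n).ext fun s => ?_)
  simpa only [exteriorPower.coe_basis, exteriorPower.ιMulti_family,
    exteriorPower.alternatingMapLinearEquiv_apply_ιMulti] using h _ (OrderEmbedding.strictMono _)

/-- The sum of the maximal minors of the matrix of coordinates, in the basis `b`, of `n` vectors:
the alternating form equal to `1` on each family of `n` basis vectors with increasing indices. -/
noncomputable def minorSum (b : Basis ι R M) (n : ℕ) : M [⋀^Fin n]→ₗ[R] R :=
  exteriorPower.alternatingMapLinearEquiv.symm ((b.exteriorPower n).constr R 1)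

/-- The bilinear form with matrix `1` on the diagonal, `2` above it and `0` below it. -/
noncomputable def upperForm (b : Basis ι R M) : M →ₗ[R] M →ₗ[R] R :=
  b.constr R fun s => b.constr R fun t => ((1 + orderSign s t : ℤ) : R)

variable (b : Basis ι R M)

@[simp]
lemma upperForm_basis (s t : ι) : upperForm b (b s) (b t) = ((1 + orderSign s t : ℤ) : R) := by
  rw [upperForm, b.constr_basis, b.constr_basis]

lemma minorSum_of_strictMono {n : ℕ} {s : Fin n → ι} (hs : StrictMono s) :
    minorSum b n (b ∘ s) = 1 := by
  let S := Set.powersetCard.ofFinEmbEquiv (OrderEmbedding.ofStrictMono s hs)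
  have hS : b.exteriorPower n S = exteriorPower.ιMulti R n (b ∘ s) := by
    rw [exteriorPower.basis_apply, exteriorPower.ιMulti_family, Equiv.symm_apply_apply,
      OrderEmbedding.coe_ofStrictMono]
  rw [← exteriorPower.alternatingMapLinearEquiv_apply_ιMulti, ← hS, minorSum,
    LinearEquiv.apply_symm_apply, Basis.constr_basis, Pi.one_apply]

lemma minorSum_basis_comp {n : ℕ} (s : Fin n → ι) :
    minorSum b n (b ∘ s) = ((∏ i, ∏ j ∈ Finset.Ioi i, orderSign (s i) (s j) : ℤ) : R) := by
  by_cases hs : Function.Injective s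
  · have hmono : StrictMono (s ∘ Tuple.sort s) :=
      (Tuple.monotone_sort s).strictMono_of_injective (hs.comp (Equiv.injective _))
    have hminor := (minorSum b n).map_perm (b ∘ s) (Tuple.sort s)
    rw [Function.comp_assoc, minorSum_of_strictMono b hmono] at hminor
    have hprod := Equiv.Perm.prod_Ioi_comp_eq_sign_mul_prod (Tuple.sort s)
      (f := fun i j => orderSign (s i) (s j)) fun i j => orderSign_comm _ _
    have hone := prod_Ioi_orderSign_of_strictMono hmono
    simp only [Function.comp_apply] at hone
    rw [hone, Int.cast_id] at hprod
    refine smul_left_cancel (Equiv.Perm.sign (Tuple.sort s)) ?_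
    rw [← hminor, Units.smul_def, zsmul_eq_mul, ← Int.cast_mul, ← hprod, Int.cast_one]
  · obtain ⟨i, j, hij, heq⟩ : ∃ i j, i < j ∧ s i = s j := by
      by_contra! h
      exact hs (Function.Injective.of_lt_imp_ne h)
    rw [(minorSum b n).map_eq_zero_of_eq (b ∘ s) (congrArg b heq) hij.ne,
      Finset.prod_eq_zero (Finset.mem_univ i) (Finset.prod_eq_zero (Finset.mem_Ioi.2 hij)
        (by rw [heq, orderSign_self])), Int.cast_zero]

lemma minorSum_vecCons_basis {n : ℕ} (t : ι) {s : Fin n → ι} (hs : StrictMono s) :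
    minorSum b (n + 1) (Matrix.vecCons (b t) (b ∘ s)) = ((∏ i, orderSign t (s i) : ℤ) : R) := by
  have hcons : Matrix.vecCons (b t) (b ∘ s) = b ∘ Matrix.vecCons t s :=
    (Fin.comp_cons b t s).symm
  rw [hcons, minorSum_basis_comp]
  simp only [Fin.prod_univ_succ, Fin.prod_Ioi_zero, Fin.prod_Ioi_succ, Matrix.cons_val_zero,
    Matrix.cons_val_succ, prod_Ioi_orderSign_of_strictMono hs, mul_one]

lemma sum_upperForm_mul_minorSum_removeNth {n : ℕ} (w : Fin (n + 1) → M) (q : M) :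
    ∑ i : Fin (n + 1), (-1) ^ (i : ℕ) * (upperForm b (w i) q * minorSum b n (i.removeNth w)) =
      coordSum b q * minorSum b (n + 1) w - minorSum b (n + 2) (Matrix.vecCons q w) := by
  let expansion : M →ₗ[R] M [⋀^Fin (n + 1)]→ₗ[R] R :=
    AlternatingMap.alternatizeUncurryFinLM ∘ₗ
      (LinearMap.smulRightₗ.flip (minorSum b n)) ∘ₗ (upperForm b).flip
  let bordered : M →ₗ[R] M [⋀^Fin (n + 1)]→ₗ[R] R :=
    (coordSum b).smulRight (minorSum b (n + 1)) - (minorSum b (n + 2)).curryLeft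
  suffices h : expansion = bordered by
    simpa [expansion, bordered, AlternatingMap.alternatizeUncurryFin_apply] using
      congrArg (fun L => L q w) h
  refine b.ext fun t => alternatingMap_ext_of_strictMono b fun s hs => ?_
  have hminor (i : Fin (n + 1)) : minorSum b n (i.removeNth (b ∘ s)) = 1 :=
    minorSum_of_strictMono b (hs.comp (Fin.strictMono_succAbove i))
  have hsign := congrArg (Int.cast : ℤ → R) (sum_neg_one_pow_mul_one_add_orderSign hs t)
  push_cast [mul_add, mul_one] at hsign
  simpa [expansion, bordered, AlternatingMap.alternatizeUncurryFin_apply, hminor,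
    minorSum_of_strictMono b hs, minorSum_vecCons_basis b t hs] using hsign

lemma minorSum_vecCons_of_upperForm_eq_zero {n : ℕ} {w : Fin n → M} {q : M}
    (h : ∀ i, upperForm b (w i) q = 0) :
    minorSum b (n + 1) (Matrix.vecCons q w) = coordSum b q * minorSum b n w := by
  cases n with
  | zero =>
    suffices hL : (minorSum b 1).curryLeft = (coordSum b).smulRight (minorSum b 0) from
      congrArg (fun L => L q w) hL
    refine b.ext fun t => alternatingMap_ext_of_strictMono b fun s hs => ?_
    simp [minorSum_vecCons_basis b t hs, minorSum_of_strictMono b hs]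
  | succ n =>
    have hsum := sum_upperForm_mul_minorSum_removeNth b w q
    simp only [h, zero_mul, mul_zero, Finset.sum_const_zero] at hsum
    exact (sub_eq_zero.1 hsum.symm).symm

end MinorSum

section Hypergeometric

/-- The reciprocal factorial `1 / z!`, extended by `0` to negative integers so that its recurrence
`invFact_sub_one` and the binomial coefficient formula hold without side conditions. -/
noncomputable def invFact (z : ℤ) : ℚ :=
  if 0 ≤ z then ((z.toNat.factorial : ℕ) : ℚ)⁻¹ else 0

lemma invFact_natCast (k : ℕ) : invFact k = (k.factorial : ℚ)⁻¹ := by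
  simp [invFact]

lemma invFact_of_neg {z : ℤ} (hz : z < 0) : invFact z = 0 :=
  if_neg hz.not_ge

lemma invFact_sub_one (z : ℤ) : invFact (z - 1) = z * invFact z := by
  rcases lt_trichotomy z 0 with h | rfl | h
  · rw [invFact_of_neg h, invFact_of_neg (by omega), mul_zero]
  · simp [invFact_of_neg]
  · obtain ⟨k, rfl⟩ : ∃ k : ℕ, z = (k + 1 : ℕ) := ⟨(z - 1).toNat, by omega⟩
    have hk : ((k + 1 : ℕ) : ℤ) - 1 = k := by simp
    have := Nat.factorial_ne_zero k
    rw [hk, invFact_natCast, invFact_natCast, Nat.factorial_succ]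
    push_cast
    field_simp

lemma choose_eq_factorial_mul_invFact (N k : ℕ) :
    (N.choose k : ℚ) = N.factorial * (invFact k * invFact (N - k)) := by
  rcases le_or_gt k N with h | h
  · rw [Nat.cast_choose ℚ h, ← Nat.cast_sub h, invFact_natCast, invFact_natCast]
    field_simp
  · rw [Nat.choose_eq_zero_of_lt h, invFact_of_neg (z := (N : ℤ) - k) (by omega)]
    simp

/-- The value of `upperForm` on the `i`-th power of `X * (1 + X)` and on `shiftedPow j`. -/
noncomputable def gramEntry (i j : ℕ) : ℚ :=
  (3 * j + 1) * (i + j).factorial * (invFact (2 * i - j + 1) * invFact (2 * j - i))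

/-- The coefficients of the combination of `shiftedPow 0, …, shiftedPow n` which is orthogonal to
the first `n` powers of `X * (1 + X)`. They vanish for `j > n`. -/
noncomputable def orthCoeff (n j : ℕ) : ℚ :=
  (-1) ^ j * n.choose j * (n + j).choose j / ((2 * j + 1) * (2 * n + j + 1).choose (2 * j + 1))

/-- The common factor of `gramEntry i j` and `gramEntry (i + 1) j`. -/
noncomputable def gramKernel (i j : ℕ) : ℚ :=
  (i + j).factorial * (invFact (2 * i - j + 3) * invFact (2 * j - i))

/-- A certificate, in the sense of Zeilberger's algorithm, for the recurrence in `i` satisfied by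
`∑ j, orthCoeff n j * gramEntry i j`. -/
noncomputable def gramCert (n i j : ℕ) : ℚ :=
  (3 * i + 4) * j * (2 * n + 1 - j) * (2 * n + j + 1) * (2 * j - i) * (2 * j - i - 1) *
    (orthCoeff n j * gramKernel i j)

lemma gramEntry_eq_mul_gramKernel (i j : ℕ) :
    gramEntry i j = (3 * j + 1) * (2 * i - j + 2) * (2 * i - j + 3) * gramKernel i j := by
  have h₂ := invFact_sub_one (2 * i - j + 2)
  have h₃ := invFact_sub_one (2 * i - j + 3)
  rw [show (2 * i - j + 2 - 1 : ℤ) = 2 * i - j + 1 by ring] at h₂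
  rw [show (2 * i - j + 3 - 1 : ℤ) = 2 * i - j + 2 by ring] at h₃
  rw [gramEntry, gramKernel, h₂, h₃]
  push_cast
  ring

lemma gramEntry_succ_eq_mul_gramKernel (i j : ℕ) :
    gramEntry (i + 1) j = (3 * j + 1) * (i + j + 1) * (2 * j - i) * gramKernel i j := by
  have h := invFact_sub_one (2 * j - i)
  rw [gramEntry, gramKernel, add_right_comm i 1 j, Nat.factorial_succ,
    show (2 * (i + 1 : ℕ) - j + 1 : ℤ) = 2 * i - j + 3 by push_cast; ring,
    show (2 * j - (i + 1 : ℕ) : ℤ) = 2 * j - i - 1 by push_cast; ring, h]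
  push_cast
  ring

lemma gramKernel_succ_right (i j : ℕ) :
    (2 * j + 2 - i) * (2 * j + 1 - i) * gramKernel i (j + 1) =
      (i + j + 1) * (2 * i - j + 3) * gramKernel i j := by
  have h₀ := invFact_sub_one (2 * i - j + 3)
  have h₁ := invFact_sub_one (2 * j - i + 1)
  have h₂ := invFact_sub_one (2 * j - i + 2)
  rw [add_sub_cancel_right] at h₁
  rw [show (2 * j - i + 2 - 1 : ℤ) = 2 * j - i + 1 by ring] at h₂
  rw [gramKernel, gramKernel, ← add_assoc i j 1, Nat.factorial_succ,
    show (2 * i - (j + 1 : ℕ) + 3 : ℤ) = 2 * i - j + 3 - 1 by push_cast; ring,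
    show (2 * (j + 1 : ℕ) - i : ℤ) = 2 * j - i + 2 by push_cast; ring, h₀, h₁, h₂]
  push_cast
  ring

lemma orthCoeff_eq_zero_of_lt {n j : ℕ} (h : n < j) : orthCoeff n j = 0 := by
  simp [orthCoeff, Nat.choose_eq_zero_of_lt h]

lemma orthCoeff_zero_right (n : ℕ) : orthCoeff n 0 = 1 / (2 * n + 1) := by
  simp [orthCoeff]

lemma orthCoeff_self (n : ℕ) :
    orthCoeff n n =
      (-1) ^ n * n.centralBinom / ((2 * n + 1) * (3 * n + 1).choose (2 * n + 1)) := by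
  rw [orthCoeff, Nat.choose_self, Nat.cast_one, mul_one, ← two_mul,
    ← Nat.centralBinom_eq_two_mul_choose, show 2 * n + n + 1 = 3 * n + 1 by ring]

lemma cast_choose_succ_right {N k : ℕ} (hk : k ≤ N) :
    (N.choose (k + 1) : ℚ) = (N - k) / (k + 1) * N.choose k := by
  have h := congrArg (Nat.cast : ℕ → ℚ) (Nat.choose_succ_right_eq N k)
  push_cast [Nat.cast_sub hk] at h
  field_simp
  linear_combination h

lemma cast_choose_succ_succ (N k : ℕ) :
    ((N + 1).choose (k + 1) : ℚ) = (N + 1) / (k + 1) * N.choose k := by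
  have h := congrArg (Nat.cast : ℕ → ℚ) (Nat.add_one_mul_choose_eq N k)
  push_cast at h
  field_simp
  linear_combination -h

lemma orthCoeff_succ_right {n j : ℕ} (hj : j ≤ n) :
    (j + 1) * (2 * n - j) * (2 * n + j + 2) * orthCoeff n (j + 1) =
      -(2 * (2 * j + 1) * (n - j) * (n + j + 1)) * orthCoeff n j := by
  rcases hj.eq_or_lt with rfl | hlt
  · rw [orthCoeff_eq_zero_of_lt (Nat.lt_succ_self j)]
    ring
  · have hchoose : ((2 * n + j + 1).choose (2 * j + 1) : ℚ) ≠ 0 :=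
      Nat.cast_ne_zero.2 (Nat.choose_pos (by omega)).ne'
    have hsub : (2 * n - j : ℚ) ≠ 0 := sub_ne_zero.2 (by exact_mod_cast (by omega : 2 * n ≠ j))
    have hdenom : ((2 * n + (j + 1) + 1).choose (2 * (j + 1) + 1) : ℚ) =
        (2 * n + j + 2) * (2 * n - j) / ((2 * j + 3) * (2 * j + 2)) *
          (2 * n + j + 1).choose (2 * j + 1) := by
      rw [← add_assoc, mul_add, cast_choose_succ_succ,
        cast_choose_succ_right (k := 2 * j + 1) (by omega)]
      push_cast
      field_simp
      ring
    rw [orthCoeff, orthCoeff, hdenom, cast_choose_succ_right hj, ← add_assoc n j 1,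
      cast_choose_succ_succ]
    push_cast
    field_simp
    ring

lemma gramCert_succ_sub {n j : ℕ} (i : ℕ) (hj : j ≤ n) :
    gramCert n i (j + 1) - gramCert n i j =
      orthCoeff n j * (2 * (i + 1 - n) * (2 * i + 3) * (n + i + 2) * gramEntry (i + 1) j -
        (2 * n - i) * (i + 1) * (2 * n + i + 2) * gramEntry i j) := by
  have hshift : (j + 1) * (2 * n - j) * (2 * n + j + 2) * orthCoeff n (j + 1) *
      ((2 * j + 2 - i) * (2 * j + 1 - i) * gramKernel i (j + 1)) =
      -(2 * (2 * j + 1) * (n - j) * (n + j + 1)) * orthCoeff n j *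
        ((i + j + 1) * (2 * i - j + 3) * gramKernel i j) := by
    rw [orthCoeff_succ_right hj, gramKernel_succ_right]
  rw [gramEntry_succ_eq_mul_gramKernel, gramEntry_eq_mul_gramKernel, gramCert, gramCert]
  push_cast
  linear_combination (3 * i + 4 : ℚ) * hshift

lemma sum_orthCoeff_mul_gramEntry_succ (n i : ℕ) :
    2 * (i + 1 - n) * (2 * i + 3) * (n + i + 2) *
        ∑ j ∈ Finset.range (n + 1), orthCoeff n j * gramEntry (i + 1) j =
      (2 * n - i) * (i + 1) * (2 * n + i + 2) *
        ∑ j ∈ Finset.range (n + 1), orthCoeff n j * gramEntry i j := by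
  have htelescope : ∑ j ∈ Finset.range (n + 1), (gramCert n i (j + 1) - gramCert n i j) = 0 := by
    rw [Finset.sum_range_sub, gramCert, gramCert, orthCoeff_eq_zero_of_lt (Nat.lt_succ_self n)]
    simp
  rw [← sub_eq_zero, Finset.mul_sum, Finset.mul_sum, ← Finset.sum_sub_distrib, ← htelescope]
  refine Finset.sum_congr rfl fun j hj => ?_
  rw [gramCert_succ_sub i (Finset.mem_range_succ_iff.1 hj)]
  ring

lemma gramEntry_eq_zero_of_lt {i j : ℕ} (h : 2 * i + 1 < j) : gramEntry i j = 0 := by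
  rw [gramEntry, invFact_of_neg (z := 2 * i - j + 1) (by omega), zero_mul, mul_zero]

lemma gramEntry_zero_right (i : ℕ) : gramEntry i 0 = if i = 0 then 1 else 0 := by
  split_ifs with h
  · simp [h, gramEntry, invFact]
  · rw [gramEntry, invFact_of_neg (z := 2 * (0 : ℕ) - i) (by omega), mul_zero, mul_zero]

lemma gramEntry_zero_one : gramEntry 0 1 = 2 := by
  norm_num [gramEntry, invFact, Nat.factorial, show Int.toNat 2 = 2 from rfl]

lemma sum_orthCoeff_mul_gramEntry_zero {n : ℕ} (hn : 0 < n) :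
    ∑ j ∈ Finset.range (n + 1), orthCoeff n j * gramEntry 0 j = 0 := by
  have hvanish : ∀ j ∈ Finset.range (n + 1), j ∉ Finset.range 2 →
      orthCoeff n j * gramEntry 0 j = 0 := fun j _ hj => by
    rw [gramEntry_eq_zero_of_lt (by simpa using hj), mul_zero]
  have hshift := orthCoeff_succ_right n.zero_le
  rw [← Finset.sum_subset (Finset.range_subset_range.2 (by omega)) hvanish, Finset.sum_range_succ,
    Finset.sum_range_one, gramEntry_zero_right, gramEntry_zero_one, if_pos rfl]
  push_cast at hshift
  have hne : (2 * n * (n + 1) : ℚ) ≠ 0 := by positivity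
  refine (mul_eq_zero.1 ?_).resolve_left hne
  linear_combination hshift

lemma sum_orthCoeff_mul_gramEntry {n i : ℕ} (hi : i < n) :
    ∑ j ∈ Finset.range (n + 1), orthCoeff n j * gramEntry i j = 0 := by
  induction i with
  | zero => exact sum_orthCoeff_mul_gramEntry_zero hi
  | succ i ih =>
    have hrec := sum_orthCoeff_mul_gramEntry_succ n i
    rw [ih (by omega), mul_zero] at hrec
    have hne : (i : ℚ) + 1 - n ≠ 0 := sub_ne_zero.2 (by exact_mod_cast hi.ne)
    refine (mul_eq_zero.1 hrec).resolve_left ?_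
    have : (2 * (i : ℚ) + 3) ≠ 0 := by positivity
    have : ((n : ℚ) + i + 2) ≠ 0 := by positivity
    simp [*]

end Hypergeometric

section Polynomials

open Finset Polynomial

section CommRing

variable {R : Type*} [CommRing R]

lemma upperForm_basisMonomials_one (p : R[X]) :
    upperForm (basisMonomials R) p 1 = p.coeff 0 := by
  suffices h : (upperForm (basisMonomials R)).flip 1 = lcoeff R 0 from
    congrArg (fun L => L p) h
  refine (basisMonomials R).ext fun s => ?_
  have hone : (1 : R[X]) = basisMonomials R 0 := by simp
  rw [LinearMap.flip_apply, hone, upperForm_basis, lcoeff_apply, coe_basisMonomials, coeff_monomial]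
  rcases s.eq_zero_or_pos with rfl | hs
  · simp [orderSign_self]
  · simp [orderSign_of_gt hs, hs.ne']

lemma upperForm_basisMonomials_X_sub_one_mul_X_pow (p : R[X]) (t : ℕ) :
    upperForm (basisMonomials R) p ((X - 1) * X ^ t) = ((1 + X) * p).coeff (t + 1) := by
  suffices h : (upperForm (basisMonomials R)).flip ((X - 1) * X ^ t) =
      lcoeff R (t + 1) ∘ₗ LinearMap.mulLeft R (1 + X) from congrArg (fun L => L p) h
  refine (basisMonomials R).ext fun s => ?_
  have hsub : ((X - 1) * X ^ t : R[X]) = basisMonomials R (t + 1) - basisMonomials R t := by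
    simp only [coe_basisMonomials, monomial_one_right_eq_X_pow]
    ring
  rw [LinearMap.flip_apply, hsub, map_sub, upperForm_basis, upperForm_basis]
  simp only [LinearMap.comp_apply, LinearMap.mulLeft_apply, lcoeff_apply, coe_basisMonomials,
    add_mul, one_mul, coeff_add, coeff_X_mul, coeff_monomial, orderSign]
  split_ifs <;> first | omega | norm_num

lemma coordSum_basisMonomials (p : R[X]) : coordSum (basisMonomials R) p = p.eval 1 := by
  suffices h : coordSum (basisMonomials R) = leval 1 from congrArg (fun L => L p) h
  refine (basisMonomials R).ext fun s => ?_
  rw [coordSum_basis, coe_basisMonomials, leval_apply, eval_monomial, one_pow, mul_one]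

lemma coeff_X_pow_mul_one_add_X_pow_symm (i t : ℕ) :
    (X ^ i * (1 + X) ^ (i + 1) : R[X]).coeff (t + 1) =
      (X ^ t * (1 + X) ^ (i + 1) : R[X]).coeff (2 * i) := by
  rw [coeff_X_pow_mul', coeff_X_pow_mul', coeff_one_add_X_pow, coeff_one_add_X_pow]
  split_ifs with h₁ h₂ h₂
  · rw [← Nat.choose_symm (by omega), show i + 1 - (t + 1 - i) = 2 * i - t by omega]
  · rw [Nat.choose_eq_zero_of_lt (by omega), Nat.cast_zero]
  · rw [Nat.choose_eq_zero_of_lt (by omega), Nat.cast_zero]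
  · rfl

lemma upperForm_pow_X_sub_one_mul (i : ℕ) (h : R[X]) :
    upperForm (basisMonomials R) ((X * (1 + X)) ^ i) ((X - 1) * h) =
      (h * (1 + X) ^ (i + 1)).coeff (2 * i) := by
  suffices hL : upperForm (basisMonomials R) ((X * (1 + X)) ^ i) ∘ₗ LinearMap.mulLeft R (X - 1) =
      lcoeff R (2 * i) ∘ₗ LinearMap.mulRight R ((1 + X) ^ (i + 1)) from congrArg (fun L => L h) hL
  refine (basisMonomials R).ext fun t => ?_
  simp only [LinearMap.comp_apply, LinearMap.mulLeft_apply, LinearMap.mulRight_apply, lcoeff_apply,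
    coe_basisMonomials, monomial_one_right_eq_X_pow]
  rw [upperForm_basisMonomials_X_sub_one_mul_X_pow, ← coeff_X_pow_mul_one_add_X_pow_symm,
    mul_pow]
  congr 1
  ring

/-- A basis of the span of the powers of `p = X * (1 + X)` all of whose members but the first one
vanish at `1`: as `p(1) = 2`, one can take `p ^ (j + 1) - 2 * p ^ j`, see `shiftedPow_succ`. The
factor `X - 1` is put in evidence because `upperForm` is explicit on its multiples. -/
noncomputable def shiftedPow : ℕ → R[X]
  | 0 => 1
  | j + 1 => (X - 1) * ((X + 2) * (X * (1 + X)) ^ j)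

lemma shiftedPow_succ (j : ℕ) :
    (shiftedPow (j + 1) : R[X]) = (X * (1 + X)) ^ (j + 1) - (2 : R) • (X * (1 + X)) ^ j := by
  rw [shiftedPow, ofNat_smul_eq_nsmul]
  ring

lemma coordSum_shiftedPow (j : ℕ) :
    coordSum (basisMonomials R) (shiftedPow j) = if j = 0 then 1 else 0 := by
  rw [coordSum_basisMonomials]
  cases j <;> simp [shiftedPow]

lemma map_vecCons_pow_eq_zero {N : Type*} [AddCommGroup N] [Module R N] {n j : ℕ} (hj : j < n)
    (φ : R[X] [⋀^Fin (n + 1)]→ₗ[R] N) (p : R[X]) :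
    φ (Matrix.vecCons (p ^ j) fun k => p ^ (k : ℕ)) = 0 :=
  φ.map_eq_zero_of_eq (i := 0) (j := Fin.succ ⟨j, hj⟩) _ (by simp) (Fin.succ_ne_zero _).symm

lemma map_vecCons_pow_self {N : Type*} [AddCommGroup N] [Module R N] {n : ℕ}
    (φ : R[X] [⋀^Fin (n + 1)]→ₗ[R] N) (p : R[X]) :
    φ (Matrix.vecCons (p ^ n) fun k => p ^ (k : ℕ)) = (-1) ^ n • φ fun k => p ^ (k : ℕ) := by
  have hsnoc : (Fin.last n).insertNth (p ^ n) (fun k : Fin n => p ^ (k : ℕ)) =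
      fun k : Fin (n + 1) => p ^ (k : ℕ) := by
    rw [Fin.insertNth_last']
    ext k : 1
    refine Fin.lastCases ?_ (fun k => ?_) k <;> simp
  rw [← φ.neg_one_pow_smul_map_insertNth (Fin.last n), hsnoc, Fin.val_last]

lemma map_vecCons_shiftedPow {N : Type*} [AddCommGroup N] [Module R N] {n j : ℕ} (hj : j ≤ n)
    (φ : R[X] [⋀^Fin (n + 1)]→ₗ[R] N) :
    φ (Matrix.vecCons (shiftedPow j) fun k => (X * (1 + X)) ^ (k : ℕ)) =
      φ (Matrix.vecCons ((X * (1 + X)) ^ j) fun k => (X * (1 + X)) ^ (k : ℕ)) := by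
  cases j with
  | zero => simp [shiftedPow]
  | succ j =>
    have hzero := map_vecCons_pow_eq_zero hj φ (X * (1 + X))
    simp only [← AlternatingMap.curryLeft_apply_apply] at hzero ⊢
    rw [shiftedPow_succ, map_sub, map_smul, AlternatingMap.sub_apply, AlternatingMap.smul_apply,
      hzero, smul_zero, sub_zero]

end CommRing

lemma choose_add_choose_eq_gramEntry_succ {i j : ℕ} (h : j ≤ 2 * i) :
    (((i + j + 2).choose (2 * i - j) + (i + j + 1).choose (2 * i - j) : ℕ) : ℚ) =
      gramEntry i (j + 1) := by
  have hrec := invFact_sub_one (2 * j - i + 2)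
  rw [gramEntry, Nat.cast_add, choose_eq_factorial_mul_invFact, choose_eq_factorial_mul_invFact,
    Nat.factorial_succ (i + j + 1)]
  push_cast [Nat.cast_sub h] at hrec ⊢
  rw [show (i + j + 2 - (2 * i - j) : ℤ) = 2 * j - i + 2 by ring,
    show (i + j + 1 - (2 * i - j) : ℤ) = 2 * j - i + 2 - 1 by ring,
    show (2 * i - (j + 1) + 1 : ℤ) = 2 * i - j by ring,
    show (2 * (j + 1) - i : ℤ) = 2 * j - i + 2 by ring, ← add_assoc, hrec]
  ring

lemma upperForm_pow_shiftedPow (i j : ℕ) :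
    upperForm (basisMonomials ℚ) ((X * (1 + X)) ^ i) (shiftedPow j) = gramEntry i j := by
  cases j with
  | zero =>
    rw [shiftedPow, upperForm_basisMonomials_one, gramEntry_zero_right, coeff_zero_eq_eval_zero]
    simp [zero_pow_eq]
  | succ j =>
    have hexpand : ((X + 2) * (X * (1 + X)) ^ j * (1 + X) ^ (i + 1) : ℚ[X]) =
        X ^ j * ((1 + X) ^ (i + j + 2) + (1 + X) ^ (i + j + 1)) := by
      rw [mul_pow]
      ring
    rw [shiftedPow, upperForm_pow_X_sub_one_mul, hexpand, coeff_X_pow_mul', coeff_add,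
      coeff_one_add_X_pow, coeff_one_add_X_pow]
    split_ifs with h
    · exact_mod_cast choose_add_choose_eq_gramEntry_succ h
    · rw [gramEntry, invFact_of_neg (by push_cast; omega), zero_mul, mul_zero]

/-- The sum of all minors of size `n` of the matrix of coefficients of the first `n` powers of
`X * (1 + X)`. -/
noncomputable def powMinorSum (n : ℕ) : ℚ :=
  minorSum (basisMonomials ℚ) n fun k => (X * (1 + X)) ^ (k : ℕ)

lemma upperForm_pow_sum_orthCoeff_smul_shiftedPow {n i : ℕ} (hi : i < n) :
    upperForm (basisMonomials ℚ) ((X * (1 + X)) ^ i)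
      (∑ j ∈ range (n + 1), orthCoeff n j • shiftedPow j) = 0 := by
  simp only [map_sum, map_smul, upperForm_pow_shiftedPow, smul_eq_mul]
  exact sum_orthCoeff_mul_gramEntry hi

lemma coordSum_sum_orthCoeff_smul_shiftedPow (n : ℕ) :
    coordSum (basisMonomials ℚ) (∑ j ∈ range (n + 1), orthCoeff n j • shiftedPow j) =
      orthCoeff n 0 := by
  simp [coordSum_shiftedPow]

lemma map_vecCons_sum_orthCoeff_smul_shiftedPow (n : ℕ) (φ : ℚ[X] [⋀^Fin (n + 1)]→ₗ[ℚ] ℚ) :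
    φ (Matrix.vecCons (∑ j ∈ range (n + 1), orthCoeff n j • shiftedPow j)
      fun k => (X * (1 + X)) ^ (k : ℕ)) =
      (-1) ^ n * orthCoeff n n * φ fun k => (X * (1 + X)) ^ (k : ℕ) := by
  set v : Fin n → ℚ[X] := fun k => (X * (1 + X)) ^ (k : ℕ)
  calc
    φ (Matrix.vecCons (∑ j ∈ range (n + 1), orthCoeff n j • shiftedPow j) v)
    _ = ∑ j ∈ range (n + 1), orthCoeff n j • φ (Matrix.vecCons (shiftedPow j) v) := by
      have hsum := φ.map_update_sum (range (n + 1)) 0 (fun j => orthCoeff n j • shiftedPow j)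
        (Matrix.vecCons 0 v)
      simp only [← φ.map_vecCons_smul]
      simpa only [Matrix.vecCons, Fin.update_cons_zero] using hsum
    _ = ∑ j ∈ range (n + 1), orthCoeff n j • φ (Matrix.vecCons ((X * (1 + X)) ^ j) v) :=
      sum_congr rfl fun j hj => by rw [map_vecCons_shiftedPow (mem_range_succ_iff.1 hj)]
    _ = orthCoeff n n • φ (Matrix.vecCons ((X * (1 + X)) ^ n) v) := by
      rw [sum_range_succ, add_eq_right]
      exact sum_eq_zero fun j hj => by rw [map_vecCons_pow_eq_zero (mem_range.1 hj), smul_zero]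
    _ = (-1) ^ n * orthCoeff n n * φ fun k => (X * (1 + X)) ^ (k : ℕ) := by
      rw [map_vecCons_pow_self, smul_eq_mul, zsmul_eq_mul]
      push_cast
      ring

lemma powMinorSum_succ_mul_orthCoeff (n : ℕ) :
    (-1) ^ n * orthCoeff n n * powMinorSum (n + 1) = orthCoeff n 0 * powMinorSum n := by
  rw [powMinorSum, ← map_vecCons_sum_orthCoeff_smul_shiftedPow,
    minorSum_vecCons_of_upperForm_eq_zero _ fun i =>
      upperForm_pow_sum_orthCoeff_smul_shiftedPow i.isLt,
    coordSum_sum_orthCoeff_smul_shiftedPow, powMinorSum]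

lemma powMinorSum_succ_mul_centralBinom (n : ℕ) :
    powMinorSum (n + 1) * n.centralBinom = powMinorSum n * (3 * n + 1).choose (2 * n + 1) := by
  have hrec := powMinorSum_succ_mul_orthCoeff n
  have hchoose : ((3 * n + 1).choose (2 * n + 1) : ℚ) ≠ 0 :=
    Nat.cast_ne_zero.2 (Nat.choose_pos (by omega)).ne'
  rw [orthCoeff_self, orthCoeff_zero_right, ← mul_div_assoc, ← mul_assoc, ← mul_pow, neg_one_mul,
    neg_neg, one_pow, one_mul] at hrec
  field_simp at hrec
  linear_combination hrec

end Polynomials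

section Ideals

open Finset

lemma mem_ideals3_iff_forall_step {S : Set (ℤ × ℤ × ℤ)} {W I : Finset (ℤ × ℤ × ℤ)} :
    I ∈ ideals3 S W ↔ I ⊆ W ∧ ∀ u v, step3 S W u v → v ∈ I → u ∈ I := by
  rw [ideals3, mem_filter, mem_powerset, IsIdeal3]
  refine ⟨fun ⟨hI, _, hle⟩ => ⟨hI, fun u v huv => hle u v ⟨huv.1, huv.2.1, .single huv⟩⟩,
    fun ⟨hI, hstep⟩ => ⟨hI, hI, ?_⟩⟩
  rintro u v ⟨-, -, huv⟩ hv
  induction huv using Relation.ReflTransGen.head_induction_on with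
  | refl => exact hv
  | head huw _ hw => exact hstep _ _ huw hw

lemma ideals3_empty (S : Set (ℤ × ℤ × ℤ)) : ideals3 S ∅ = {∅} := by
  ext I
  rw [mem_ideals3_iff_forall_step, subset_empty, mem_singleton, and_iff_left_iff_imp]
  rintro rfl u v - hv
  exact absurd hv (notMem_empty v)

lemma mem_V3 {n : ℕ} {a b c : ℤ} :
    (a, b, c) ∈ V3 n ↔ 0 ≤ a ∧ 0 ≤ b ∧ 0 ≤ c ∧ a + b + c ≤ (n : ℤ) - 2 := by
  simp only [V3, mem_filter, mem_product, mem_Icc]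
  omega

lemma V3_zero : V3 0 = ∅ :=
  eq_empty_of_forall_notMem fun ⟨a, b, c⟩ h => by
    have := mem_V3.1 h
    omega

/-- The order ideals of `T_n({r, g, o, y})`, see `mem_ideals3_iff`. The vector `y = o + r` is left
out since it imposes no condition of its own. -/
structure IsDownClosed (n : ℕ) (I : Finset (ℤ × ℤ × ℤ)) : Prop where
  subset : I ⊆ V3 n
  sub_vr {a b c : ℤ} : (a, b, c) ∈ I → 0 < a → (a - 1, b, c) ∈ I
  sub_vg {a b c : ℤ} : (a, b, c) ∈ I → 0 < b → (a, b - 1, c) ∈ I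
  sub_vo {a b c : ℤ} : (a, b, c) ∈ I → 0 < c → (a + 1, b, c - 1) ∈ I

lemma IsDownClosed.sub_vy {n : ℕ} {I : Finset (ℤ × ℤ × ℤ)} (h : IsDownClosed n I) {a b c : ℤ}
    (hI : (a, b, c) ∈ I) (hc : 0 < c) : (a, b, c - 1) ∈ I := by
  have ha := (mem_V3.1 (h.subset hI)).1
  simpa using h.sub_vr (h.sub_vo hI hc) (by omega)

lemma mem_ideals3_iff {n : ℕ} {I : Finset (ℤ × ℤ × ℤ)} :
    I ∈ ideals3 {vr, vg, vo, vy} (V3 n) ↔ IsDownClosed n I := by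
  rw [mem_ideals3_iff_forall_step]
  constructor
  · rintro ⟨hI, hstep⟩
    have hsub {u v : ℤ × ℤ × ℤ} (e) (hv : v ∈ I) (he : e ∈ ({vr, vg, vo, vy} : Set (ℤ × ℤ × ℤ)))
        (hu : u ∈ V3 n) (huv : v = u + e) : u ∈ I :=
      hstep u v ⟨hu, hI hv, e, he, huv⟩ hv
    refine ⟨hI, fun hv _ => hsub vr hv ?_ ?_ ?_, fun hv _ => hsub vg hv ?_ ?_ ?_,
      fun hv _ => hsub vo hv ?_ ?_ ?_⟩
    all_goals
      have := mem_V3.1 (hI hv)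
      simp [mem_V3, vr, vg, vo] <;> omega
  · refine fun h => ⟨h.subset, ?_⟩
    rintro ⟨a, b, c⟩ v ⟨hu, -, e, he, rfl⟩ hv
    have hu := mem_V3.1 hu
    simp only [Set.mem_insert_iff, Set.mem_singleton_iff] at he
    rcases he with rfl | rfl | rfl | rfl
    · simpa [vr] using h.sub_vr hv (by simp [vr]; omega)
    · simpa [vg] using h.sub_vg hv (by simp [vg]; omega)
    · simpa [vo] using h.sub_vo hv (by simp [vo]; omega)
    · simpa [vy] using h.sub_vy hv (by simp [vy]; omega)

/-- The number of points `(0, b, c)` in an order ideal, encoded as the first missing `c`. -/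
noncomputable def rowLen (I : Finset (ℤ × ℤ × ℤ)) (b : ℕ) : ℕ :=
  sInf {c : ℕ | ((0 : ℤ), (b : ℤ), (c : ℤ)) ∉ I}

/-- The strictly increasing sequence of exponents attached to an order ideal: its row lengths, read
from the last row to the first one, plus `0, 1, …, n - 1`. -/
noncomputable def rowPos {n : ℕ} (I : Finset (ℤ × ℤ × ℤ)) (k : Fin n) : ℕ :=
  rowLen I k.rev + k

namespace IsDownClosed

variable {n : ℕ} {I : Finset (ℤ × ℤ × ℤ)}

lemma mem_iff_lt_rowLen (h : IsDownClosed n I) (b : ℕ) {c : ℤ} (hc : 0 ≤ c) :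
    ((0 : ℤ), (b : ℤ), c) ∈ I ↔ c < rowLen I b := by
  lift c to ℕ using hc
  have hne : {c : ℕ | ((0 : ℤ), (b : ℤ), (c : ℤ)) ∉ I}.Nonempty :=
    ⟨n, fun hn => by have := mem_V3.1 (h.subset hn); omega⟩
  rw [Nat.cast_lt]
  refine ⟨fun hc => ?_, fun hc => not_not.1 (Nat.notMem_of_lt_sInf hc)⟩
  by_contra! hle
  refine Nat.sInf_mem hne ?_
  exact Nat.decreasingInduction
    (motive := fun d _ => ((0 : ℤ), (b : ℤ), (d : ℤ)) ∈ I)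
    (fun d _ hd => by simpa using h.sub_vy hd (by omega)) hc hle

lemma rowLen_eq (h : IsDownClosed n I) {b k : ℕ}
    (hk : ∀ c : ℤ, 0 ≤ c → (((0 : ℤ), (b : ℤ), c) ∈ I ↔ c < k)) : rowLen I b = k :=
  eq_of_forall_lt_iff fun c => by
    have := hk c c.cast_nonneg
    rwa [h.mem_iff_lt_rowLen b c.cast_nonneg, Nat.cast_lt, Nat.cast_lt] at this

lemma rowLen_add_lt (h : IsDownClosed n I) {b : ℕ} (hb : b < n) : rowLen I b + b < n := by
  rcases Nat.eq_zero_or_pos (rowLen I b) with h0 | h0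
  · omega
  · have hlast := (h.mem_iff_lt_rowLen b (c := rowLen I b - 1) (by omega)).2 (by omega)
    have := mem_V3.1 (h.subset hlast)
    omega

lemma rowLen_succ_le (h : IsDownClosed n I) (b : ℕ) : rowLen I (b + 1) ≤ rowLen I b := by
  by_contra! hlt
  have hmem := (h.mem_iff_lt_rowLen (b + 1) (Nat.cast_nonneg _)).2 (Nat.cast_lt.2 hlt)
  have hsub := h.sub_vg hmem (by omega)
  rw [Nat.cast_succ, add_sub_cancel_right, h.mem_iff_lt_rowLen b (Nat.cast_nonneg _)] at hsub
  exact lt_irrefl _ hsub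

lemma rowPos_strictMono (h : IsDownClosed n I) : StrictMono (rowPos I : Fin n → ℕ) := by
  cases n with
  | zero => exact Subsingleton.strictMono _
  | succ n =>
    refine Fin.strictMono_iff_lt_succ.2 fun k => ?_
    have := h.rowLen_succ_le (k.rev : ℕ)
    simp only [rowPos, Fin.rev_castSucc, Fin.val_succ, Fin.val_castSucc, Fin.rev_succ]
    omega

end IsDownClosed

/-- The part of an order ideal with positive first coordinate, translated by `-r`. -/
noncomputable def dropLayer (I : Finset (ℤ × ℤ × ℤ)) : Finset (ℤ × ℤ × ℤ) :=
  {p ∈ I.image (· - vr) | 0 ≤ p.1}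

/-- The rows, counted from the last one, in which the bottom layer of an order ideal exceeds the
next layer. -/
noncomputable def excessRows (n : ℕ) (I : Finset (ℤ × ℤ × ℤ)) : Finset (Fin n) :=
  {k | rowLen (dropLayer I) k.rev < rowLen I k.rev}

/-- The translate of an order ideal by `r` together with a bottom layer whose row lengths exceed
those of the order ideal by one in the rows, counted from the last one, belonging to `s`. -/
noncomputable def addLayer {n : ℕ} (I : Finset (ℤ × ℤ × ℤ)) (s : Finset (Fin n)) :
    Finset (ℤ × ℤ × ℤ) :=
  {p ∈ V3 (n + 1) | p - vr ∈ I ∨ p.1 = 0 ∧ ∃ k : Fin n,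
    p.2.1 = (k.rev : ℕ) ∧ p.2.2 < (rowLen I k.rev + if k ∈ s then 1 else 0 : ℕ)}

lemma mem_dropLayer {I : Finset (ℤ × ℤ × ℤ)} {a b c : ℤ} :
    (a, b, c) ∈ dropLayer I ↔ (a + 1, b, c) ∈ I ∧ 0 ≤ a := by
  simp [dropLayer, vr, sub_eq_iff_eq_add]

lemma mem_addLayer {n : ℕ} {I : Finset (ℤ × ℤ × ℤ)} {s : Finset (Fin n)} {a b c : ℤ} :
    (a, b, c) ∈ addLayer I s ↔ (a, b, c) ∈ V3 (n + 1) ∧ ((a - 1, b, c) ∈ I ∨ a = 0 ∧ ∃ k : Fin n,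
      b = (k.rev : ℕ) ∧ c < (rowLen I k.rev + if k ∈ s then 1 else 0 : ℕ)) := by
  rw [addLayer, mem_filter, vr, Prod.mk_sub_mk, Prod.mk_zero_zero, sub_zero]

lemma exists_eq_val_rev {n : ℕ} {b : ℤ} (h₀ : 0 ≤ b) (hn : b < n) :
    ∃ k : Fin n, b = (k.rev : ℕ) :=
  ⟨Fin.rev ⟨b.toNat, by omega⟩, by rw [Fin.rev_rev, Int.toNat_of_nonneg h₀]⟩

namespace IsDownClosed

variable {n : ℕ} {I : Finset (ℤ × ℤ × ℤ)}

protected lemma dropLayer (h : IsDownClosed (n + 1) I) : IsDownClosed n (dropLayer I) where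
  subset := fun ⟨a, b, c⟩ hp => by
    obtain ⟨hI, ha⟩ := mem_dropLayer.1 hp
    have := mem_V3.1 (h.subset hI)
    exact mem_V3.2 (by omega)
  sub_vr hp ha := by
    obtain ⟨hI, -⟩ := mem_dropLayer.1 hp
    exact mem_dropLayer.2 ⟨by simpa using h.sub_vr hI (by omega), by omega⟩
  sub_vg hp hb := (mem_dropLayer.1 hp).imp_left (h.sub_vg · hb) |> mem_dropLayer.2
  sub_vo hp hc := by
    obtain ⟨hI, ha⟩ := mem_dropLayer.1 hp
    exact mem_dropLayer.2 ⟨h.sub_vo hI hc, by omega⟩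

lemma rowLen_dropLayer_le (h : IsDownClosed (n + 1) I) (b : ℕ) :
    rowLen (dropLayer I) b ≤ rowLen I b := by
  by_contra! hlt
  have hdrop := (h.dropLayer.mem_iff_lt_rowLen b (Nat.cast_nonneg _)).2 (Nat.cast_lt.2 hlt)
  have hI := h.sub_vr (mem_dropLayer.1 hdrop).1 (by omega)
  exact lt_irrefl _ ((h.mem_iff_lt_rowLen b (Nat.cast_nonneg _)).1 hI)

lemma rowLen_le_rowLen_dropLayer_add_one (h : IsDownClosed (n + 1) I) (b : ℕ) :
    rowLen I b ≤ rowLen (dropLayer I) b + 1 := by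
  by_contra! hlt
  have hI := h.sub_vo ((h.mem_iff_lt_rowLen b (Nat.cast_nonneg _)).2 (Nat.cast_lt.2 hlt)) (by omega)
  rw [Nat.cast_succ, add_sub_cancel_right] at hI
  have hdrop := mem_dropLayer.2 ⟨hI, le_rfl⟩
  exact lt_irrefl _ ((h.dropLayer.mem_iff_lt_rowLen b (Nat.cast_nonneg _)).1 hdrop)

lemma rowLen_eq_rowLen_dropLayer_add (h : IsDownClosed (n + 1) I) (k : Fin n) :
    rowLen I k.rev = rowLen (dropLayer I) k.rev + if k ∈ excessRows n I then 1 else 0 := by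
  have := h.rowLen_dropLayer_le k.rev
  have := h.rowLen_le_rowLen_dropLayer_add_one k.rev
  simp only [excessRows, mem_filter, mem_univ, true_and]
  split_ifs <;> omega

lemma rowPos_zero (h : IsDownClosed (n + 1) I) : rowPos I (0 : Fin (n + 1)) = 0 := by
  have := h.rowLen_add_lt (Nat.lt_succ_self n)
  simp only [rowPos, Fin.rev_zero, Fin.val_last, Fin.val_zero]
  omega

lemma rowPos_succ (h : IsDownClosed (n + 1) I) (k : Fin n) :
    rowPos I k.succ = rowPos (dropLayer I) k + (if k ∈ excessRows n I then 1 else 0) + 1 := by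
  have := h.rowLen_eq_rowLen_dropLayer_add k
  simp only [rowPos, Fin.rev_succ, Fin.val_succ, Fin.val_castSucc]
  omega

variable {s : Finset (Fin n)}

lemma strictMono_rowPos_add (h : IsDownClosed n I)
    (hs : Function.Injective fun k => rowPos I k + if k ∈ s then 1 else 0) :
    StrictMono fun k => rowPos I k + if k ∈ s then 1 else 0 := by
  refine Monotone.strictMono_of_injective (fun k l hkl => ?_) hs
  rcases hkl.eq_or_lt with rfl | hlt
  · exact le_rfl
  · have := h.rowPos_strictMono hlt
    split_ifs <;> omega

protected lemma addLayer (h : IsDownClosed n I)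
    (hs : Function.Injective fun k => rowPos I k + if k ∈ s then 1 else 0) :
    IsDownClosed (n + 1) (addLayer I s) where
  subset := filter_subset _ _
  sub_vr {a b c} hp ha := by
    obtain ⟨hV, hI | ⟨h0, -⟩⟩ := mem_addLayer.1 hp
    · rw [mem_V3] at hV
      refine mem_addLayer.2 ⟨mem_V3.2 (by omega), ?_⟩
      rcases (Int.le_sub_one_iff.2 ha).eq_or_lt with h1 | h1
      · obtain ⟨k, rfl⟩ := exists_eq_val_rev (n := n) hV.2.1 (by omega)
        rw [← h1, h.mem_iff_lt_rowLen _ hV.2.2.1] at hI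
        exact .inr ⟨h1.symm, k, rfl, by omega⟩
      · exact .inl (h.sub_vr hI h1)
    · omega
  sub_vg {a b c} hp hb := by
    obtain ⟨hV, hI | ⟨rfl, k, rfl, hlt⟩⟩ := mem_addLayer.1 hp <;> rw [mem_V3] at hV <;>
      refine mem_addLayer.2 ⟨mem_V3.2 (by omega), ?_⟩
    · exact .inl (h.sub_vg hI hb)
    · have hk : (k : ℕ) + 1 < n := by
        have := Fin.val_rev k
        omega
      have hstep := h.strictMono_rowPos_add hs (show k < ⟨k + 1, hk⟩ from Nat.lt_succ_self _)
      refine .inr ⟨rfl, ⟨k + 1, hk⟩, ?_, hlt.trans_le ?_⟩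
      · simp only [Fin.val_rev]
        omega
      · simp only [rowPos] at hstep
        omega
  sub_vo {a b c} hp hc := by
    obtain ⟨hV, hI⟩ := mem_addLayer.1 hp
    rw [mem_V3] at hV
    refine mem_addLayer.2 ⟨mem_V3.2 (by omega), .inl ?_⟩
    obtain hI | ⟨rfl, k, rfl, hlt⟩ := hI
    · simpa using h.sub_vo hI hc
    · rw [zero_add, sub_self, h.mem_iff_lt_rowLen _ (by omega)]
      split_ifs at hlt <;> omega

lemma dropLayer_addLayer (h : IsDownClosed n I) (s : Finset (Fin n)) :
    dropLayer (addLayer I s) = I := by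
  ext ⟨a, b, c⟩
  rw [mem_dropLayer, mem_addLayer, add_sub_cancel_right]
  constructor
  · rintro ⟨⟨-, hI | ⟨h0, -⟩⟩, ha⟩
    · exact hI
    · omega
  · intro hI
    have hV := mem_V3.1 (h.subset hI)
    exact ⟨⟨mem_V3.2 (by omega), .inl hI⟩, hV.1⟩

lemma rowLen_addLayer (h : IsDownClosed n I)
    (hs : Function.Injective fun k => rowPos I k + if k ∈ s then 1 else 0) (k : Fin n) :
    rowLen (addLayer I s) k.rev = rowLen I k.rev + if k ∈ s then 1 else 0 := by
  refine (h.addLayer hs).rowLen_eq fun c hc => ?_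
  rw [mem_addLayer]
  constructor
  · rintro ⟨-, hI | ⟨-, l, hl, hlt⟩⟩
    · have := mem_V3.1 (h.subset hI)
      omega
    · obtain rfl : k = l := Fin.rev_injective (Fin.ext (Nat.cast_injective hl))
      exact hlt
  · intro hlt
    have := h.rowLen_add_lt k.rev.isLt
    exact ⟨mem_V3.2 (by split_ifs at hlt <;> omega), .inr ⟨rfl, k, rfl, hlt⟩⟩

lemma excessRows_addLayer (h : IsDownClosed n I)
    (hs : Function.Injective fun k => rowPos I k + if k ∈ s then 1 else 0) :
    excessRows n (addLayer I s) = s := by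
  ext k
  rw [excessRows, mem_filter, h.dropLayer_addLayer, h.rowLen_addLayer hs]
  split_ifs with hk <;> simp [hk]

lemma addLayer_dropLayer (h : IsDownClosed (n + 1) I) :
    addLayer (dropLayer I) (excessRows n I) = I := by
  ext ⟨a, b, c⟩
  simp only [mem_addLayer, mem_dropLayer, ← h.rowLen_eq_rowLen_dropLayer_add, sub_add_cancel]
  constructor
  · rintro ⟨hV, ⟨hI, -⟩ | ⟨rfl, k, rfl, hlt⟩⟩
    · exact hI
    · exact (h.mem_iff_lt_rowLen _ (mem_V3.1 hV).2.2.1).2 hlt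
  · intro hI
    have hV := mem_V3.1 (h.subset hI)
    refine ⟨h.subset hI, ?_⟩
    rcases hV.1.eq_or_lt with rfl | ha
    · obtain ⟨k, rfl⟩ := exists_eq_val_rev (n := n) hV.2.1 (by omega)
      exact .inr ⟨rfl, k, rfl, (h.mem_iff_lt_rowLen _ hV.2.2.1).1 hI⟩
    · exact .inl ⟨hI, by omega⟩

end IsDownClosed

lemma sum_ideals3_succ {M : Type*} [AddCommMonoid M] (n : ℕ) (f : (Fin (n + 1) → ℕ) → M) :
    ∑ I ∈ ideals3 {vr, vg, vo, vy} (V3 (n + 1)), f (rowPos I) =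
      ∑ I ∈ ideals3 {vr, vg, vo, vy} (V3 n), ∑ s : Finset (Fin n) with
        Function.Injective (fun k => rowPos I k + if k ∈ s then 1 else 0),
          f (Fin.cons 0 fun k => rowPos I k + (if k ∈ s then 1 else 0) + 1) := by
  have hrow {I : Finset (ℤ × ℤ × ℤ)} (h : IsDownClosed (n + 1) I) : rowPos I =
      Fin.cons 0 fun k => rowPos (dropLayer I) k + (if k ∈ excessRows n I then 1 else 0) + 1 :=
    funext (Fin.cases h.rowPos_zero h.rowPos_succ)
  rw [sum_sigma']
  refine sum_bij' (fun I _ => ⟨dropLayer I, excessRows n I⟩) (fun p _ => addLayer p.1 p.2)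
    (fun I hI => ?_) (fun p hp => ?_) (fun I hI => (mem_ideals3_iff.1 hI).addLayer_dropLayer)
    (fun p hp => ?_) (fun I hI => congrArg f (hrow (mem_ideals3_iff.1 hI)))
  · have h := mem_ideals3_iff.1 hI
    refine mem_sigma.2 ⟨mem_ideals3_iff.2 h.dropLayer, mem_filter.2 ⟨mem_univ _, fun k l hkl => ?_⟩⟩
    refine Fin.succ_injective _ (h.rowPos_strictMono.injective ?_)
    rw [h.rowPos_succ, h.rowPos_succ]
    exact congrArg (· + 1) hkl
  · obtain ⟨hI, hs⟩ := mem_sigma.1 hp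
    exact mem_ideals3_iff.2 ((mem_ideals3_iff.1 hI).addLayer (mem_filter.1 hs).2)
  · obtain ⟨hI, hs⟩ := mem_sigma.1 hp
    have h := mem_ideals3_iff.1 hI
    exact Sigma.ext (h.dropLayer_addLayer p.2)
      (heq_of_eq (h.excessRows_addLayer (mem_filter.1 hs).2))

end Ideals

section Counting

open Finset Polynomial

lemma sum_injective_map_X_pow {R N : Type*} [CommRing R] [AddCommGroup N] [Module R N] {n : ℕ}
    (φ : R[X] [⋀^Fin (n + 1)]→ₗ[R] N) (e : Fin n → ℕ) :
    φ (Matrix.vecCons 1 fun k => X * (1 + X) * X ^ e k) =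
      ∑ s : Finset (Fin n) with Function.Injective (fun k => e k + if k ∈ s then 1 else 0),
        φ fun k => X ^ (Fin.cons 0 (fun k => e k + (if k ∈ s then 1 else 0) + 1) :
          Fin (n + 1) → ℕ) k := by
  have hadd : (fun k : Fin n => X * (1 + X) * X ^ e k) =
      (fun k => X ^ (e k + 1 + 1)) + fun k => (X : R[X]) ^ (e k + 1) := by
    ext k : 1
    rw [Pi.add_apply]
    ring
  have hterm (s : Finset (Fin n)) :
      φ (Matrix.vecCons 1 (s.piecewise (fun k => X ^ (e k + 1 + 1)) fun k => X ^ (e k + 1))) =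
        φ fun k => X ^ (Fin.cons 0 (fun k => e k + (if k ∈ s then 1 else 0) + 1) :
          Fin (n + 1) → ℕ) k := by
    congr 1
    ext k : 1
    refine Fin.cases ?_ (fun k => ?_) k
    · simp
    · by_cases hk : k ∈ s <;> simp [hk]
  rw [hadd, ← AlternatingMap.curryLeft_apply_apply, ← AlternatingMap.coe_multilinearMap,
    MultilinearMap.map_add_univ, sum_filter_of_ne]
  · exact sum_congr rfl fun s _ => hterm s
  · intro s _ hs
    contrapose! hs
    refine φ.map_eq_zero_of_not_injective _ fun hinj => hs fun k l hkl => ?_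
    refine Fin.succ_injective _ (hinj ?_)
    simpa using congrArg (fun m => (X : R[X]) ^ (m + 1)) hkl

lemma sum_ideals3_alternatingMap {R N : Type*} [CommRing R] [AddCommGroup N] [Module R N] (n : ℕ)
    (φ : R[X] [⋀^Fin n]→ₗ[R] N) :
    ∑ I ∈ ideals3 {vr, vg, vo, vy} (V3 n), φ (fun k => X ^ rowPos I k) =
      φ fun k => (X * (1 + X)) ^ (k : ℕ) := by
  induction n with
  | zero =>
    rw [V3_zero, ideals3_empty, sum_singleton]
    exact congrArg φ (Subsingleton.elim _ _)
  | succ n ih =>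
    set p : R[X] := X * (1 + X)
    have hpow : (fun k : Fin (n + 1) => p ^ (k : ℕ)) =
        Matrix.vecCons 1 fun k : Fin n => LinearMap.mulLeft R p (p ^ (k : ℕ)) := by
      ext k : 1
      refine Fin.cases ?_ (fun k => ?_) k <;> simp [pow_succ']
    have hsum := ih ((φ.curryLeft 1).compLinearMap (LinearMap.mulLeft R p))
    simp only [AlternatingMap.compLinearMap_apply] at hsum
    rw [hpow, ← AlternatingMap.curryLeft_apply_apply, ← hsum,
      sum_ideals3_succ n fun e => φ fun k => X ^ e k]
    exact sum_congr rfl fun I _ => (sum_injective_map_X_pow φ (rowPos I)).symm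

theorem card_ideals3_eq_powMinorSum (n : ℕ) :
    ((ideals3 {vr, vg, vo, vy} (V3 n)).card : ℚ) = powMinorSum n := by
  rw [powMinorSum, ← sum_ideals3_alternatingMap, card_eq_sum_ones, Nat.cast_sum]
  refine sum_congr rfl fun I hI => ?_
  have hminor := minorSum_of_strictMono (basisMonomials ℚ) (mem_ideals3_iff.1 hI).rowPos_strictMono
  simpa [Function.comp_def, monomial_one_right_eq_X_pow] using hminor.symm

theorem card_ideals3_succ_mul_centralBinom (n : ℕ) :
    (ideals3 {vr, vg, vo, vy} (V3 (n + 1))).card * n.centralBinom =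
      (ideals3 {vr, vg, vo, vy} (V3 n)).card * (3 * n + 1).choose (2 * n + 1) := by
  have hrec := powMinorSum_succ_mul_centralBinom n
  rw [← card_ideals3_eq_powMinorSum, ← card_ideals3_eq_powMinorSum] at hrec
  exact_mod_cast hrec

theorem card_ideals3_succ_mul_factorial (n : ℕ) :
    (ideals3 {vr, vg, vo, vy} (V3 (n + 1))).card * ((2 * n).factorial * (2 * n + 1).factorial) =
      (ideals3 {vr, vg, vo, vy} (V3 n)).card * (n.factorial * (3 * n + 1).factorial) := by
  have hcentral : n.centralBinom * n.factorial * n.factorial = (2 * n).factorial := by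
    rw [Nat.centralBinom_eq_two_mul_choose, two_mul]
    exact Nat.add_choose_mul_factorial_mul_factorial n n
  have hchoose : (3 * n + 1).choose (2 * n + 1) * (2 * n + 1).factorial * n.factorial =
      (3 * n + 1).factorial := by
    rw [show 3 * n + 1 = 2 * n + 1 + n by ring, Nat.choose_symm_add]
    exact Nat.add_choose_mul_factorial_mul_factorial (2 * n + 1) n
  rw [← hcentral, ← hchoose]
  linear_combination
    n.factorial ^ 2 * (2 * n + 1).factorial * card_ideals3_succ_mul_centralBinom n

lemma factorial_mul_prod_factorial_succ (n : ℕ) :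
    n.factorial * ∏ j ∈ range (n + 1), (n + 1 + j).factorial =
      (∏ j ∈ range n, (n + j).factorial) * ((2 * n).factorial * (2 * n + 1).factorial) := by
  have hshift := prod_range_succ' (fun j => (n + j).factorial) (n + 1)
  rw [prod_range_succ, prod_range_succ] at hshift
  simp only [add_zero, ← add_assoc, add_right_comm n _ 1, ← two_mul] at hshift
  rw [mul_comm, ← hshift, mul_assoc]

end Counting

/-- The number of order ideals of `T_n({r,g,o,y})` is given by the ASM product formula:
`|J| · ∏_{j=0}^{n-1} (n+j)! = ∏_{j=0}^{n-1} (3j+1)!`. -/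
theorem stmt11 (n : ℕ) (hn : 1 ≤ n) :
    (ideals3 {vr, vg, vo, vy} (V3 n)).card * ∏ j ∈ Finset.range n, Nat.factorial (n + j) =
      ∏ j ∈ Finset.range n, Nat.factorial (3 * j + 1) := by
  clear hn
  induction n with
  | zero => simp [V3_zero, ideals3_empty]
  | succ n ih =>
    refine Nat.eq_of_mul_eq_mul_left n.factorial_pos ?_
    rw [mul_left_comm, factorial_mul_prod_factorial_succ, mul_left_comm,
      card_ideals3_succ_mul_factorial, Finset.prod_range_succ, ← ih]
    ring
end
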